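/- arXiv:2308.12719 — 3 statements merged into one kernel-verified Lean document; each statement's English description precedes it below -/
import Mathlib

section
/- Let g ≥ 1, n ≥ 3, and let A = (α₁,…,αₙ) be a unit fraction partition of g with α₁ ≤ ⋯ ≤ αₙ; set F_{n−1}(A) = (α₁⋯αₙ)/lcm(α₁,…,αₙ). If (n,g) = (3,1), then F_{n−1}(A) ≤ 9 with equality if and only if A = (3,3,3). In all other cases F_{n−1}(A) ≤ 2·t_{g,n−1}²/g, with equality if and only if A is one of (6,6,6), (2,6,6,6), or (s_{g,1}, …, s_{g,n−2}, 2t_{g,n−1}, 2t_{g,n−1}). -/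
open Finset

/-- The `g`-Sylvester sequence: `s_{g,1} = g+1`, `s_{g,k+1} = s_{g,k}(s_{g,k}-1)+1`.
(The value at `0` is junk and never used.) -/
def sylv (g : ℕ) : ℕ → ℕ
  | 0 => 0
  | 1 => g + 1
  | k + 2 => sylv g (k + 1) * (sylv g (k + 1) - 1) + 1

/-- The truncated `g`-Sylvester sequence `t_{g,k} = s_{g,k} - 1`. -/
def tsylv (g k : ℕ) : ℕ := sylv g k - 1

/-- `A` is a unit fraction partition of `g`: a tuple of positive integers with
`1/g = ∑ 1/αᵢ`. -/
def IsUFP {n : ℕ} (g : ℕ) (A : Fin n → ℕ) : Prop :=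
  (∀ i, 0 < A i) ∧ (1 : ℚ) / (g : ℚ) = ∑ i, (1 : ℚ) / (A i : ℚ)

/-- The truncated Sylvester sequence, indexed from zero. -/
def tt (g : ℕ) : ℕ → ℕ
  | 0 => g
  | i + 1 => tt g i * (tt g i + 1)

lemma sylv_eq_tt (g i : ℕ) : sylv g (i + 1) = tt g i + 1 := by
  induction i with
  | zero => simp [sylv, tt]
  | succ i ih =>
    rw [sylv, ih, tt]
    simp; ring

lemma tt_pos (g : ℕ) (hg : 1 ≤ g) (i : ℕ) : 0 < tt g i := by
  induction i with
  | zero => rw [tt]; omega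
  | succ i ih => rw [tt]; positivity

lemma tt_prod (g m : ℕ) : g * ∏ i ∈ range m, (tt g i + 1) = tt g m := by
  induction m with
  | zero => simp [tt]
  | succ m ih => rw [prod_range_succ, ← mul_assoc, ih, tt]

lemma tt_sum (g : ℕ) (hg : 1 ≤ g) (m : ℕ) :
    ∑ i ∈ range m, 1 / ((tt g i : ℝ) + 1) = 1 / (g : ℝ) - 1 / (tt g m : ℝ) := by
  induction m with
  | zero => simp [tt]
  | succ m ih =>
    have h : (0 : ℝ) < tt g m := by exact_mod_cast tt_pos g hg m
    rw [sum_range_succ, ih, tt]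
    push_cast
    field_simp
    ring

/-- Abel summation estimate. -/
lemma abel_aux (x v : ℕ → ℝ) (j k : ℕ) (w : ℝ) (hw : ∀ i, j ≤ i → i < j + k → w ≤ x i)
    (anti : ∀ i i', j ≤ i → i ≤ i' → i' < j + k → x i' ≤ x i)
    (hv : ∀ l, l ≤ k → 0 ≤ ∑ i ∈ range l, v (j + i)) :
    w * ∑ i ∈ range k, v (j + i) ≤ ∑ i ∈ range k, x (j + i) * v (j + i) := by
  induction k generalizing w with
  | zero => simp
  | succ k ih =>
    have h1 := ih (x (j + k)) (fun i h1 h2 => anti i (j + k) h1 (by omega) (by omega))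
      (fun i i' h1 h2 h3 => anti i i' h1 h2 (by omega)) (fun l hl => hv l (by omega))
    have h2 := hv (k + 1) le_rfl
    have h3 := hw (j + k) (by omega) (by omega)
    have h4 := mul_le_mul_of_nonneg_right h3 h2
    rw [sum_range_succ] at h4 ⊢
    rw [sum_range_succ]
    linarith

lemma log_aux (x y : ℝ) (hx : 0 < x) (hy : 0 < y) : x * Real.log (y / x) ≤ y - x := by
  have h := Real.log_le_sub_one_of_pos (div_pos hy hx)
  have := mul_le_mul_of_nonneg_left h hx.le
  have e : x * (y / x - 1) = y - x := by field_simp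
  linarith

lemma log_aux_eq (x y : ℝ) (hx : 0 < x) (hy : 0 < y) (h : y - x ≤ x * Real.log (y / x)) :
    x = y := by
  by_contra hne
  have h1 : y / x ≠ 1 := by
    intro h1
    rw [div_eq_one_iff_eq hx.ne'] at h1
    exact hne h1.symm
  have h := Real.log_lt_sub_one_of_pos (div_pos hy hx) h1
  have := mul_lt_mul_of_pos_left h hx
  have e : x * (y / x - 1) = y - x := by field_simp
  linarith

lemma compare (x y : ℕ → ℝ) (m : ℕ) (hm : 0 < m) (hx : ∀ i, i < m → 0 < x i)
    (hy : ∀ i, i < m → 0 < y i)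
    (anti : ∀ i i', i ≤ i' → i' < m → x i' ≤ x i)
    (pre : ∀ l, l < m → ∑ i ∈ range l, x i ≤ ∑ i ∈ range l, y i ∧
      (∑ i ∈ range l, y i ≤ ∑ i ∈ range l, x i → ∀ i, i < l → x i = y i))
    (hprod : ∏ i ∈ range m, x i ≤ ∏ i ∈ range m, y i) :
    ∑ i ∈ range m, x i ≤ ∑ i ∈ range m, y i ∧
      (∑ i ∈ range m, y i ≤ ∑ i ∈ range m, x i → ∀ i, i < m → x i = y i) := by
  set v : ℕ → ℝ := fun i => Real.log (y i / x i) with hvdef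
  have hf0 : 0 ≤ ∑ i ∈ range m, v i := by
    have : ∑ i ∈ range m, v i = Real.log (∏ i ∈ range m, y i) - Real.log (∏ i ∈ range m, x i) := by
      rw [Real.log_prod, Real.log_prod, ← sum_sub_distrib]
      · apply sum_congr rfl
        intro i hi
        rw [mem_range] at hi
        exact Real.log_div (hy i hi).ne' (hx i hi).ne'
      · intro i hi; rw [mem_range] at hi; exact (hx i hi).ne'
      · intro i hi; rw [mem_range] at hi; exact (hy i hi).ne'
    rw [this]
    have hp : 0 < ∏ i ∈ range m, x i := prod_pos (fun i hi => hx i (mem_range.mp hi))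
    linarith [Real.log_le_log hp hprod]
  obtain ⟨j, hj, hmin⟩ := exists_min_image (range m) (fun l => ∑ i ∈ range l, v i)
    ⟨0, mem_range.mpr hm⟩
  rw [mem_range] at hj
  obtain ⟨k, rfl⟩ : ∃ k, m = j + k := ⟨m - j, by omega⟩
  have h0 := hmin 0 (mem_range.mpr hm)
  simp only [range_zero, sum_empty] at h0
  have hv : ∀ l, l ≤ k → 0 ≤ ∑ i ∈ range l, v (j + i) := by
    intro l hl
    have e := sum_range_add v j l
    rcases hl.lt_or_eq with h | h
    · have := hmin (j + l) (mem_range.mpr (by omega))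
      linarith
    · subst h
      linarith
  have hab := abel_aux x v j k 0 (fun i _ h2 => (hx i h2).le)
    (fun i i' _ h2 h3 => anti i i' h2 h3) hv
  rw [zero_mul] at hab
  have hpt : ∀ i, i < k → x (j + i) * v (j + i) ≤ y (j + i) - x (j + i) := fun i hi =>
    log_aux _ _ (hx _ (by omega)) (hy _ (by omega))
  have hsum : ∑ i ∈ range k, x (j + i) * v (j + i) ≤ ∑ i ∈ range k, (y (j + i) - x (j + i)) :=
    sum_le_sum (fun i hi => hpt i (mem_range.mp hi))
  have hpre := pre j hj
  have ex := sum_range_add x j k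
  have ey := sum_range_add y j k
  rw [sum_sub_distrib] at hsum
  constructor
  · linarith [hpre.1]
  · intro hge
    have hP := hpre.2 (by linarith)
    have hT : ∑ i ∈ range k, (y (j + i) - x (j + i)) = ∑ i ∈ range k, x (j + i) * v (j + i) := by
      rw [sum_sub_distrib]
      linarith [hpre.1]
    have hT' := (sum_eq_sum_iff_of_le (fun i hi => hpt i (mem_range.mp hi))).mp hT.symm
    intro i hi
    by_cases hij : i < j
    · exact hP i hij
    · obtain ⟨d, rfl⟩ : ∃ d, i = j + d := ⟨i - j, by omega⟩
      exact log_aux_eq _ _ (hx _ hi) (hy _ hi) (hT' d (mem_range.mpr (by omega))).ge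

lemma sum_int (a : ℕ → ℕ) (ha : ∀ i, 0 < a i) (m : ℕ) :
    ∃ z : ℤ, (∑ i ∈ range m, 1 / (a i : ℝ)) * ∏ i ∈ range m, (a i : ℝ) = z := by
  induction m with
  | zero => exact ⟨0, by simp⟩
  | succ m ih =>
    obtain ⟨z, hz⟩ := ih
    refine ⟨z * a m + ∏ i ∈ range m, (a i : ℤ), ?_⟩
    rw [sum_range_succ, prod_range_succ]
    push_cast
    rw [← hz]
    have : (a m : ℝ) ≠ 0 := by exact_mod_cast (ha m).ne'
    field_simp

lemma rem_ge (g : ℕ) (hg : 1 ≤ g) (a : ℕ → ℕ) (ha : ∀ i, 0 < a i) (m : ℕ)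
    (h : ∑ i ∈ range m, 1 / (a i : ℝ) < 1 / (g : ℝ)) :
    1 ≤ (1 / (g : ℝ) - ∑ i ∈ range m, 1 / (a i : ℝ)) * (g * ∏ i ∈ range m, (a i : ℝ)) := by
  obtain ⟨z, hz⟩ := sum_int a ha m
  have hg' : (0 : ℝ) < g := by exact_mod_cast hg
  have hp : 0 < ∏ i ∈ range m, (a i : ℝ) := prod_pos (fun i _ => by exact_mod_cast ha i)
  have e : (1 / (g : ℝ) - ∑ i ∈ range m, 1 / (a i : ℝ)) * (g * ∏ i ∈ range m, (a i : ℝ)) =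
      (((∏ i ∈ range m, (a i : ℤ)) - g * z : ℤ) : ℝ) := by
    push_cast
    rw [← hz]
    field_simp
  have hpos : 0 < (1 / (g : ℝ) - ∑ i ∈ range m, 1 / (a i : ℝ)) * (g * ∏ i ∈ range m, (a i : ℝ)) := by
    apply mul_pos (by linarith) (by positivity)
  rw [e] at hpos ⊢
  exact_mod_cast hpos

lemma lemS (g : ℕ) (hg : 1 ≤ g) (a : ℕ → ℕ) (ha : ∀ i, 0 < a i) (mono : Monotone a) (m : ℕ)
    (h : ∑ i ∈ range m, 1 / (a i : ℝ) < 1 / (g : ℝ)) :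
    ∑ i ∈ range m, 1 / (a i : ℝ) ≤ ∑ i ∈ range m, 1 / ((tt g i : ℝ) + 1) ∧
      (∑ i ∈ range m, 1 / ((tt g i : ℝ) + 1) ≤ ∑ i ∈ range m, 1 / (a i : ℝ) →
        ∀ i, i < m → 1 / (a i : ℝ) = 1 / ((tt g i : ℝ) + 1)) := by
  induction m using Nat.strong_induction_on with
  | _ m ih =>
  rcases Nat.eq_zero_or_pos m with rfl | hm
  · simp
  by_cases hlt : ∑ i ∈ range m, 1 / (a i : ℝ) < ∑ i ∈ range m, 1 / ((tt g i : ℝ) + 1)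
  · exact ⟨hlt.le, fun h' => absurd h' (not_le.mpr hlt)⟩
  push Not at hlt
  have hpa : ∀ i, (0 : ℝ) < a i := fun i => by exact_mod_cast ha i
  have hg' : (0 : ℝ) < g := by exact_mod_cast hg
  refine compare (fun i => 1 / (a i : ℝ)) (fun i => 1 / ((tt g i : ℝ) + 1)) m hm
    (fun i _ => by have := hpa i; positivity) (fun i _ => by positivity) ?_ ?_ ?_
  · intro i i' hi _
    exact one_div_le_one_div_of_le (hpa i) (by exact_mod_cast mono hi)
  · intro l hl
    refine ih l hl (lt_of_le_of_lt ?_ h)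
    apply sum_le_sum_of_subset_of_nonneg
    · intro i hi; simp at hi ⊢; omega
    · intro i _ _; have := hpa i; positivity
  · have h1 := rem_ge g hg a ha m h
    have h2 := tt_sum g hg m
    have htp : (0 : ℝ) < tt g m := by exact_mod_cast tt_pos g hg m
    have h3 : (g : ℝ) * ∏ i ∈ range m, ((tt g i : ℝ) + 1) = tt g m := by
      exact_mod_cast tt_prod g m
    have hp : 0 < ∏ i ∈ range m, (a i : ℝ) := prod_pos (fun i _ => hpa i)
    have hp2 : 0 < ∏ i ∈ range m, ((tt g i : ℝ) + 1) := prod_pos (fun i _ => by positivity)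
    have h4 : 1 ≤ 1 / (tt g m : ℝ) * (g * ∏ i ∈ range m, (a i : ℝ)) := by
      refine h1.trans (mul_le_mul_of_nonneg_right ?_ (by positivity))
      linarith
    rw [one_div_mul_eq_div, le_div_iff₀ htp, one_mul, ← h3] at h4
    have h5 := le_of_mul_le_mul_left h4 hg'
    simp only [prod_div_distrib, prod_const_one]
    exact one_div_le_one_div_of_le hp2 h5

/-- The numerical estimate used in the second case. -/
def EE (g k : ℕ) : Prop := 9 * g * ∏ i ∈ range k, ((k + 3 - i) * tt g i) < 2 * (tt g k + 1) ^ 2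

lemma EE_succ (g k : ℕ) (hg : 1 ≤ g) (h : EE g k) (hk : k + 4 ≤ tt g k) : EE g (k + 1) := by
  unfold EE at *
  have e : ∏ i ∈ range (k + 1), ((k + 1 + 3 - i) * tt g i) =
      (k + 4) * tt g k * ∏ i ∈ range k, ((k + 3 - i) * tt g i) := by
    rw [prod_mul_distrib, prod_range_succ', prod_range_succ (fun i => tt g i), prod_mul_distrib]
    have : ∏ i ∈ range k, (k + 1 + 3 - (i + 1)) = ∏ i ∈ range k, (k + 3 - i) :=
      prod_congr rfl (fun i _ => by omega)
    rw [this]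
    simp only [Nat.sub_zero]
    ring
  rw [e, tt]
  set t := tt g k
  set P := ∏ i ∈ range k, ((k + 3 - i) * tt g i)
  have ht : 0 < t := tt_pos g hg k
  calc 9 * g * ((k + 4) * t * P) = (k + 4) * t * (9 * g * P) := by ring
    _ ≤ t * t * (2 * (t + 1) ^ 2) := by gcongr
    _ = 2 * (t * (t + 1)) ^ 2 := by ring
    _ < 2 * (t * (t + 1) + 1) ^ 2 := by gcongr; omega

lemma EE_gen (g k0 : ℕ) (hg : 1 ≤ g) (h : EE g k0) (hk : k0 + 4 ≤ tt g k0) (d : ℕ) :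
    EE g (k0 + d) ∧ k0 + d + 4 ≤ tt g (k0 + d) := by
  induction d with
  | zero => exact ⟨h, hk⟩
  | succ d ih =>
    refine ⟨EE_succ g _ hg ih.1 ih.2, ?_⟩
    rw [← add_assoc, tt]
    have := tt_pos g hg (k0 + d)
    nlinarith [ih.2]

lemma EE_all (g k : ℕ) (hg : 1 ≤ g) :
    EE g k ∨ (g = 1 ∧ k ≤ 3) ∨ (g = 2 ∧ k ≤ 2) := by
  rcases Nat.lt_or_ge g 4 with h4 | h4
  · interval_cases g
    · by_cases hk : k ≤ 3
      · exact Or.inr (Or.inl ⟨rfl, hk⟩)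
      · obtain ⟨d, rfl⟩ : ∃ d, k = 4 + d := ⟨k - 4, by omega⟩
        exact Or.inl (EE_gen 1 4 le_rfl (by simp [EE, prod_range_succ, tt]) (by simp [tt]) d).1
    · by_cases hk : k ≤ 2
      · exact Or.inr (Or.inr ⟨rfl, hk⟩)
      · obtain ⟨d, rfl⟩ : ∃ d, k = 3 + d := ⟨k - 3, by omega⟩
        exact Or.inl (EE_gen 2 3 (by norm_num) (by simp [EE, prod_range_succ, tt]) (by simp [tt]) d).1
    · left
      by_cases hk : k = 0
      · subst hk; simp [EE, tt]
      · obtain ⟨d, rfl⟩ : ∃ d, k = 1 + d := ⟨k - 1, by omega⟩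
        exact (EE_gen 3 1 (by norm_num) (by simp [EE, tt]) (by simp [tt]) d).1
  · left
    have := (EE_gen g 0 hg (by simp only [EE, range_zero, prod_empty, tt]; nlinarith)
      (by simpa [tt] using h4) k).1
    simpa using this

lemma three_six (p q w : ℕ) (hp : 0 < p) (hpq : p ≤ q) (hqw : q ≤ w) (h36 : 36 ≤ p * q)
    (h2 : q < 2 * p) (hs : 1 / (p : ℝ) + 1 / q + 1 / w = 1 / 2) : p = 6 ∧ q = 6 ∧ w = 6 := by
  have hp' : (0 : ℝ) < p := by exact_mod_cast hp
  have hq' : (0 : ℝ) < q := by exact_mod_cast (by omega : 0 < q)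
  have hw' : (0 : ℝ) < w := by exact_mod_cast (by omega : 0 < w)
  have e : 2 * (q * w + p * w + p * q) = p * q * w := by
    field_simp at hs
    have : (2 * (q * w + p * w + p * q) : ℝ) = p * q * w := by linarith
    exact_mod_cast this
  have hp6 : p ≤ 6 := by
    by_contra hcon
    push Not at hcon
    have h1 : 7 * (q * w) ≤ p * (q * w) := Nat.mul_le_mul_right _ hcon
    have h2 : p * w ≤ q * w := Nat.mul_le_mul_right _ hpq
    have h3 : p * q ≤ w * q := Nat.mul_le_mul_right _ (by omega)
    have h4 : 0 < q * w := Nat.mul_pos (by omega) (by omega)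
    nlinarith
  have hq11 : q ≤ 11 := by omega
  interval_cases p <;> interval_cases q <;> omega

lemma od_inj (a b : ℝ) (h : 1 / a = 1 / b) : a = b := by simpa using h

section core
variable (g k : ℕ) (hg : 1 ≤ g) (a : ℕ → ℕ) (ha : ∀ i, 0 < a i) (mono : Monotone a)
  (hsum : ∑ i ∈ range (k + 3), 1 / (a i : ℝ) = 1 / (g : ℝ))
include hg ha mono hsum

omit hg mono in
lemma pre_lt (m : ℕ) (hm : m < k + 3) : ∑ i ∈ range m, 1 / (a i : ℝ) < 1 / (g : ℝ) := by
  rw [← hsum]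
  have hpa : ∀ i, (0 : ℝ) < a i := fun i => by exact_mod_cast ha i
  apply sum_lt_sum_of_subset (i := m)
  · intro i hi; simp at hi ⊢; omega
  · simpa using hm
  · simp
  · have := hpa m; positivity
  · intro i _ _; have := hpa i; positivity

omit hg in
lemma rem_le (m : ℕ) (hm : m < k + 3) :
    (a m : ℝ) * (1 / (g : ℝ) - ∑ i ∈ range m, 1 / (a i : ℝ)) ≤ ((k + 3 - m : ℕ) : ℝ) := by
  obtain ⟨d, hd⟩ : ∃ d, k + 3 = m + d := ⟨k + 3 - m, by omega⟩
  have hpa : ∀ i, (0 : ℝ) < a i := fun i => by exact_mod_cast ha i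
  rw [← hsum, hd, sum_range_add]
  have : ∑ i ∈ range d, 1 / (a (m + i) : ℝ) ≤ ∑ i ∈ range d, 1 / (a m : ℝ) := by
    apply sum_le_sum
    intro i _
    exact one_div_le_one_div_of_le (hpa m) (by exact_mod_cast mono (by omega))
  rw [sum_const, card_range, nsmul_eq_mul] at this
  have h2 := mul_le_mul_of_nonneg_left this (hpa m).le
  have e : (a m : ℝ) * (d * (1 / (a m : ℝ))) = d := by have := (hpa m).ne'; field_simp
  have e2 : m + d - m = d := by omega
  rw [e2]
  linarith

lemma rem_lower (m : ℕ) (hm : m < k + 3) :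
    1 / (tt g m : ℝ) ≤ 1 / (g : ℝ) - ∑ i ∈ range m, 1 / (a i : ℝ) := by
  have h := (lemS g hg a ha mono m (pre_lt g k a ha hsum m hm)).1
  rw [tt_sum g hg] at h
  linarith

lemma crude (m : ℕ) (hm : m < k + 3) : a m ≤ (k + 3 - m) * tt g m := by
  have h1 := rem_le g k a ha mono hsum m hm
  have h2 := rem_lower g k hg a ha mono hsum m hm
  have hpa : (0 : ℝ) < a m := by exact_mod_cast ha m
  have ht : (0 : ℝ) < tt g m := by exact_mod_cast tt_pos g hg m
  have h3 := (mul_le_mul_of_nonneg_left h2 hpa.le).trans h1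
  rw [mul_one_div, div_le_iff₀ ht] at h3
  exact_mod_cast h3

lemma caseA (hP : 2 * tt g (k + 1) ^ 2 ≤ g * ∏ i ∈ range (k + 2), a i)
    (hA : 2 * a k ≤ a (k + 1)) :
    ∀ i, i < k + 3 → a i = if i ≤ k then tt g i + 1 else 2 * tt g (k + 1) := by
  have hpa : ∀ i, (0 : ℝ) < a i := fun i => by exact_mod_cast ha i
  have hg' : (0 : ℝ) < g := by exact_mod_cast hg
  have ht : (0 : ℝ) < tt g (k + 1) := by exact_mod_cast tt_pos g hg (k + 1)
  set x : ℕ → ℝ := fun i => if i ≤ k then 1 / (a i : ℝ) else 2 / (a i : ℝ) with hxd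
  set y : ℕ → ℝ := fun i => if i ≤ k then 1 / ((tt g i : ℝ) + 1) else 1 / (tt g (k + 1) : ℝ) with hyd
  have xs : ∀ l, l ≤ k + 1 → ∑ i ∈ range l, x i = ∑ i ∈ range l, 1 / (a i : ℝ) := by
    intro l hl
    refine sum_congr rfl fun i hi => ?_
    rw [mem_range] at hi
    simp only [hxd]; rw [if_pos (by omega)]
  have ys : ∀ l, l ≤ k + 1 → ∑ i ∈ range l, y i = ∑ i ∈ range l, 1 / ((tt g i : ℝ) + 1) := by
    intro l hl
    refine sum_congr rfl fun i hi => ?_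
    rw [mem_range] at hi
    simp only [hyd]; rw [if_pos (by omega)]
  have xl : x (k + 1) = 2 / (a (k + 1) : ℝ) := by simp [hxd]
  have yl : y (k + 1) = 1 / (tt g (k + 1) : ℝ) := by simp [hyd]
  have hsum' := hsum
  rw [sum_range_succ, sum_range_succ] at hsum'
  have hc := compare x y (k + 2) (by omega)
    (fun i _ => by have := hpa i; simp only [hxd]; split_ifs <;> positivity)
    (fun i _ => by simp only [hyd]; split_ifs <;> positivity) ?_ ?_ ?_
  · have hxy := hc.2 (by
      rw [sum_range_succ, sum_range_succ _ (k + 1), xs _ le_rfl, ys _ le_rfl, xl, yl, tt_sum g hg]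
      have h1 : 1 / (a (k + 2) : ℝ) ≤ 1 / (a (k + 1) : ℝ) :=
        one_div_le_one_div_of_le (hpa _) (by exact_mod_cast mono (by omega))
      have h2 : 2 / (a (k + 1) : ℝ) = 1 / (a (k + 1) : ℝ) + 1 / (a (k + 1) : ℝ) := by ring
      linarith)
    have hlo : ∀ i, i ≤ k → a i = tt g i + 1 := by
      intro i hi
      have := hxy i (by omega)
      simp only [hxd, hyd, if_pos hi] at this
      have h3 := od_inj _ _ this
      exact_mod_cast h3
    have hk1 : (a (k + 1) : ℝ) = 2 * tt g (k + 1) := by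
      have := hxy (k + 1) (by omega)
      rw [xl, yl] at this
      have h2 := (hpa (k + 1)).ne'
      field_simp at this
      linarith
    have hk2 : (a (k + 2) : ℝ) = 2 * tt g (k + 1) := by
      have e : ∑ i ∈ range (k + 1), 1 / (a i : ℝ) = 1 / (g : ℝ) - 1 / (tt g (k + 1) : ℝ) := by
        rw [← tt_sum g hg]
        refine sum_congr rfl fun i hi => ?_
        rw [mem_range] at hi
        rw [hlo i (by omega)]; push_cast; rfl
      rw [e, hk1] at hsum'
      apply od_inj
      have : 1 / (2 * (tt g (k + 1) : ℝ)) = 1 / (tt g (k + 1) : ℝ) / 2 := by ring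
      linarith
    intro i hi
    split_ifs with h
    · exact hlo i h
    · rcases (by omega : i = k + 1 ∨ i = k + 2) with rfl | rfl
      · exact_mod_cast hk1
      · exact_mod_cast hk2
  · intro i i' h1 h2
    simp only [hxd]
    split_ifs with h3 h4
    · exact one_div_le_one_div_of_le (hpa i) (by exact_mod_cast mono h1)
    · omega
    · have : i' = k + 1 := by omega
      subst this
      have h5 : (2 * a i : ℝ) ≤ a (k + 1) := by
        have : 2 * a i ≤ a (k + 1) := (Nat.mul_le_mul_left 2 (mono (by assumption))).trans hA
        exact_mod_cast this
      rw [div_le_div_iff₀ (hpa _) (hpa _)]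
      linarith
    · have : i = i' := by omega
      subst this; rfl
  · intro l hl
    rw [xs l (by omega), ys l (by omega)]
    have h := lemS g hg a ha mono l (pre_lt g k a ha hsum l (by omega))
    refine ⟨h.1, fun h' i hi => ?_⟩
    have := h.2 h' i hi
    simp only [hxd, hyd]
    rw [if_pos (by omega), if_pos (by omega)]
    exact this
  · rw [prod_range_succ, prod_range_succ _ (k + 1), xl, yl]
    have xp : ∏ i ∈ range (k + 1), x i = 1 / ∏ i ∈ range (k + 1), (a i : ℝ) := by
      rw [one_div, ← prod_inv_distrib]
      refine prod_congr rfl fun i hi => ?_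
      rw [mem_range] at hi
      simp only [hxd]; rw [if_pos (by omega), one_div]
    have yp : ∏ i ∈ range (k + 1), y i = 1 / ∏ i ∈ range (k + 1), ((tt g i : ℝ) + 1) := by
      rw [one_div, ← prod_inv_distrib]
      refine prod_congr rfl fun i hi => ?_
      rw [mem_range] at hi
      simp only [hyd]; rw [if_pos (by omega), one_div]
    rw [xp, yp]
    have h3 : (g : ℝ) * ∏ i ∈ range (k + 1), ((tt g i : ℝ) + 1) = tt g (k + 1) := by
      exact_mod_cast tt_prod g (k + 1)
    have hP' : (2 * tt g (k + 1) ^ 2 : ℝ) ≤ g * ∏ i ∈ range (k + 2), (a i : ℝ) := by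
      exact_mod_cast hP
    rw [prod_range_succ] at hP'
    have hp : 0 < ∏ i ∈ range (k + 1), (a i : ℝ) := prod_pos (fun i _ => hpa i)
    have hp2 : 0 < ∏ i ∈ range (k + 1), ((tt g i : ℝ) + 1) := prod_pos (fun i _ => by positivity)
    have := hpa (k + 1)
    rw [div_mul_div_comm, div_mul_div_comm, div_le_div_iff₀ (by positivity) (by positivity)]
    apply le_of_mul_le_mul_left _ hg'
    calc _ = 2 * (tt g (k + 1) : ℝ) * (g * ∏ i ∈ range (k + 1), ((tt g i : ℝ) + 1)) := by ring
      _ = 2 * tt g (k + 1) ^ 2 := by rw [h3]; ring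
      _ ≤ _ := by linarith

lemma keyB (hP : 2 * tt g (k + 1) ^ 2 ≤ g * ∏ i ∈ range (k + 2), a i)
    (hB : a (k + 1) < 2 * a k) :
    2 * (tt g (k + 1) : ℝ) ^ 2 * (1 / (g : ℝ) - ∑ i ∈ range k, 1 / (a i : ℝ)) ^ 2 ≤
      9 * g * ∏ i ∈ range k, (a i : ℝ) := by
  have hpa : ∀ i, (0 : ℝ) < a i := fun i => by exact_mod_cast ha i
  have hg' : (0 : ℝ) < g := by exact_mod_cast hg
  have hsum' := hsum
  rw [sum_range_succ, sum_range_succ, sum_range_succ] at hsum'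
  have hpos := sub_pos.mpr (pre_lt g k a ha hsum k (by omega))
  set r := 1 / (g : ℝ) - ∑ i ∈ range k, 1 / (a i : ℝ) with hr
  have hP' : (2 * tt g (k + 1) ^ 2 : ℝ) ≤ g * ∏ i ∈ range (k + 2), (a i : ℝ) := by
    exact_mod_cast hP
  rw [prod_range_succ, prod_range_succ] at hP'
  set Q := ∏ i ∈ range k, (a i : ℝ)
  have hQ : 0 < Q := prod_pos (fun i _ => hpa i)
  have h1 : 1 / (a (k + 2) : ℝ) ≤ 1 / (a (k + 1) : ℝ) :=
    one_div_le_one_div_of_le (hpa _) (by exact_mod_cast mono (by omega))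
  have h2 : (a k : ℝ) ≤ a (k + 1) := by exact_mod_cast mono (by omega)
  have h3 : (a (k + 1) : ℝ) ≤ 2 * a k := by exact_mod_cast hB.le
  have hp := hpa k
  have hq := hpa (k + 1)
  set p := (a k : ℝ)
  set q := (a (k + 1) : ℝ)
  have hru : r ≤ 1 / p + 1 / q + 1 / q := by linarith
  have hrq : r * (p * q) ≤ q + 2 * p := by
    have := mul_le_mul_of_nonneg_right hru (by positivity : 0 ≤ p * q)
    have e : (1 / p + 1 / q + 1 / q) * (p * q) = q + 2 * p := by field_simp; ring
    linarith
  have h9 : r ^ 2 * (p * q) ≤ 9 := by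
    have h4 : (r * (p * q)) ^ 2 ≤ 9 * (p * q) := by
      calc (r * (p * q)) ^ 2 ≤ (q + 2 * p) ^ 2 := by gcongr
        _ ≤ 9 * (p * q) := by nlinarith [mul_nonneg (sub_nonneg.mpr h2) (by linarith : 0 ≤ 4 * p - q)]
    have h5 : 0 < p * q := by positivity
    apply le_of_mul_le_mul_right _ h5
    linarith [h4, (by ring : r ^ 2 * (p * q) * (p * q) = (r * (p * q)) ^ 2)]
  calc 2 * (tt g (k + 1) : ℝ) ^ 2 * r ^ 2 ≤ g * (Q * p * q) * r ^ 2 := by gcongr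
    _ = g * Q * (r ^ 2 * (p * q)) := by ring
    _ ≤ g * Q * 9 := by gcongr
    _ = _ := by ring

lemma keyB' (hP : 2 * tt g (k + 1) ^ 2 ≤ g * ∏ i ∈ range (k + 2), a i)
    (hB : a (k + 1) < 2 * a k) :
    2 * (tt g k + 1) ^ 2 ≤ 9 * g * ∏ i ∈ range k, a i := by
  have h := keyB g k hg a ha mono hsum hP hB
  have h2 := rem_lower g k hg a ha mono hsum k (by omega)
  have ht : (0 : ℝ) < tt g k := by exact_mod_cast tt_pos g hg k
  have h3 : (2 * (tt g k + 1) ^ 2 : ℝ) ≤ 9 * g * ∏ i ∈ range k, (a i : ℝ) := by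
    refine le_trans ?_ h
    calc (2 * (tt g k + 1) ^ 2 : ℝ) = 2 * (tt g (k + 1) : ℝ) ^ 2 * (1 / (tt g k : ℝ)) ^ 2 := by
          rw [tt]; push_cast; field_simp
      _ ≤ _ := by gcongr
  exact_mod_cast h3

lemma caseB_EE (hP : 2 * tt g (k + 1) ^ 2 ≤ g * ∏ i ∈ range (k + 2), a i)
    (hB : a (k + 1) < 2 * a k) (hE : EE g k) : False := by
  have h := keyB' g k hg a ha mono hsum hP hB
  unfold EE at hE
  have : ∏ i ∈ range k, a i ≤ ∏ i ∈ range k, ((k + 3 - i) * tt g i) := by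
    apply prod_le_prod'
    intro i hi
    rw [mem_range] at hi
    exact crude g k hg a ha mono hsum i (by omega)
  have := Nat.mul_le_mul_left (9 * g) this
  omega

end core

theorem core_bound (g k : ℕ) (hg : 1 ≤ g) (a : ℕ → ℕ) (ha : ∀ i, 0 < a i) (mono : Monotone a)
    (hsum : ∑ i ∈ range (k + 3), 1 / (a i : ℝ) = 1 / (g : ℝ)) (hne : ¬(k = 0 ∧ g = 1))
    (hP : 2 * tt g (k + 1) ^ 2 ≤ g * ∏ i ∈ range (k + 2), a i) :
    (k = 0 ∧ g = 2 ∧ ∀ i, i < 3 → a i = 6) ∨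
    (k = 1 ∧ g = 1 ∧ ∀ i, i < 4 → a i = if i = 0 then 2 else 6) ∨
    (∀ i, i < k + 3 → a i = if i ≤ k then tt g i + 1 else 2 * tt g (k + 1)) := by
  by_cases hA : 2 * a k ≤ a (k + 1)
  · exact Or.inr (Or.inr (caseA g k hg a ha mono hsum hP hA))
  have hB : a (k + 1) < 2 * a k := by omega
  have h0 := rem_le g k a ha mono hsum 0 (by omega)
  have l0 := pre_lt g k a ha hsum 0 (by omega)
  have l1 := pre_lt g k a ha hsum 1 (by omega)
  have l2 := pre_lt g k a ha hsum 2 (by omega)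
  have h1 := rem_le g k a ha mono hsum 1 (by omega)
  have h2 := rem_le g k a ha mono hsum 2 (by omega)
  have kB := keyB g k hg a ha mono hsum hP hB
  have kB' := keyB' g k hg a ha mono hsum hP hB
  have p0 := ha 0
  have p1 := ha 1
  have p2 := ha 2
  have q0 : (0 : ℝ) < a 0 := by exact_mod_cast p0
  have q1 : (0 : ℝ) < a 1 := by exact_mod_cast p1
  have q2 : (0 : ℝ) < a 2 := by exact_mod_cast p2
  have m01 : a 0 ≤ a 1 := mono (by omega)
  have m12 : a 1 ≤ a 2 := mono (by omega)
  have m23 : a 2 ≤ a 3 := mono (by omega)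
  rcases EE_all g k hg with hE | ⟨rfl, hk⟩ | ⟨rfl, hk⟩
  · exact (caseB_EE g k hg a ha mono hsum hP hB hE).elim
  · interval_cases k
    · exact absurd ⟨rfl, rfl⟩ hne
    · -- g = 1, n = 4
      simp [sum_range_succ, prod_range_succ, tt] at h0 l1 kB hP hB hsum
      have b0 : a 0 ≤ 4 := by exact_mod_cast h0
      have c0 : 1 < a 0 := by
        by_contra hc
        have : a 0 = 1 := by omega
        rw [this] at l1; norm_num at l1
      have e : a 0 = 2 := by
        interval_cases h : a 0
        · rfl
        · norm_num at kB
        · norm_num at kB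
      rw [e] at hsum hP
      have := three_six (a 1) (a 2) (a 3) p1 m12 m23 (by nlinarith) hB (by
        simp only [one_div]; push_cast at hsum; linarith)
      right; left
      refine ⟨rfl, rfl, fun i hi => ?_⟩
      interval_cases i <;> simp [e, this]
    · -- g = 1, n = 5
      exfalso
      simp [sum_range_succ, prod_range_succ, tt] at h0 h1 l1 l2 kB
      have b0 : a 0 ≤ 5 := by exact_mod_cast h0
      have c0 : 1 < a 0 := by
        by_contra hc
        have : a 0 = 1 := by omega
        rw [this] at l1; norm_num at l1
      have b1 : a 1 * a 0 ≤ 4 * a 0 + a 1 := by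
        have : (a 1 * a 0 : ℝ) ≤ 4 * a 0 + a 1 := by
          have := mul_le_mul_of_nonneg_right h1 q0.le
          have e : (a 1 : ℝ) * (1 - (a 0 : ℝ)⁻¹) * a 0 = a 1 * a 0 - a 1 := by field_simp
          linarith
        exact_mod_cast this
      have b1' : a 1 ≤ 8 := by nlinarith
      interval_cases a 0 <;> first | omega | skip
      all_goals interval_cases a 1 <;> first | omega | (norm_num at l2; done) | norm_num at kB
    · -- g = 1, n = 6
      exfalso
      simp [sum_range_succ, prod_range_succ, tt] at h0 h1 h2 l1 l2 kB'
      have b0 : a 0 ≤ 6 := by exact_mod_cast h0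
      have c0 : 1 < a 0 := by
        by_contra hc
        have : a 0 = 1 := by omega
        rw [this] at l1; norm_num at l1
      have b1 : a 1 * a 0 ≤ 5 * a 0 + a 1 := by
        have : (a 1 * a 0 : ℝ) ≤ 5 * a 0 + a 1 := by
          have := mul_le_mul_of_nonneg_right h1 q0.le
          have e : (a 1 : ℝ) * (1 - (a 0 : ℝ)⁻¹) * a 0 = a 1 * a 0 - a 1 := by field_simp
          linarith
        exact_mod_cast this
      have b2 : a 2 * (a 0 * a 1) ≤ 4 * (a 0 * a 1) + a 2 * (a 0 + a 1) := by
        have : (a 2 * (a 0 * a 1) : ℝ) ≤ 4 * (a 0 * a 1) + a 2 * (a 0 + a 1) := by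
          have := mul_le_mul_of_nonneg_right h2 (by positivity : (0 : ℝ) ≤ a 0 * a 1)
          have e : (a 2 : ℝ) * (1 - ((a 0 : ℝ)⁻¹ + (a 1 : ℝ)⁻¹)) * (a 0 * a 1) =
            a 2 * (a 0 * a 1) - a 2 * (a 0 + a 1) := by field_simp; ring
          linarith
        exact_mod_cast this
      have c2 : a 0 + a 1 < a 0 * a 1 := by
        have : (a 0 + a 1 : ℝ) < a 0 * a 1 := by
          have := mul_lt_mul_of_pos_right l2 (by positivity : (0 : ℝ) < a 0 * a 1)
          have e : ((a 0 : ℝ)⁻¹ + (a 1 : ℝ)⁻¹) * (a 0 * a 1) = a 0 + a 1 := by field_simp; ring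
          linarith
        exact_mod_cast this
      have b1' : a 1 ≤ 10 := by nlinarith
      interval_cases a 0 <;> interval_cases a 1 <;> omega
  · interval_cases k
    · -- g = 2, n = 3
      simp [sum_range_succ, prod_range_succ, tt] at hP hB hsum
      have := three_six (a 0) (a 1) (a 2) p0 m01 m12 (by nlinarith) hB (by
        simp only [one_div]; linarith)
      left
      refine ⟨rfl, rfl, fun i hi => ?_⟩
      interval_cases i <;> simp [this]
    · -- g = 2, n = 4
      exfalso
      simp [sum_range_succ, prod_range_succ, tt] at h0 l1 kB
      have b0 : a 0 ≤ 8 := by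
        have : (a 0 : ℝ) ≤ 8 := by linarith
        exact_mod_cast this
      have c0 : 2 < a 0 := by
        by_contra hc
        have : a 0 = 1 ∨ a 0 = 2 := by omega
        rcases this with h | h <;> rw [h] at l1 <;> norm_num at l1
      interval_cases a 0 <;> norm_num at kB
    · -- g = 2, n = 5
      exfalso
      simp [sum_range_succ, prod_range_succ, tt] at h0 h1 l1 kB'
      have b0 : a 0 ≤ 10 := by
        have : (a 0 : ℝ) ≤ 10 := by linarith
        exact_mod_cast this
      have c0 : 2 < a 0 := by
        by_contra hc
        have : a 0 = 1 ∨ a 0 = 2 := by omega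
        rcases this with h | h <;> rw [h] at l1 <;> norm_num at l1
      have b1 : a 1 * a 0 ≤ 8 * a 0 + 2 * a 1 := by
        have : (a 1 * a 0 : ℝ) ≤ 8 * a 0 + 2 * a 1 := by
          have := mul_le_mul_of_nonneg_right h1 q0.le
          have e : (a 1 : ℝ) * (2⁻¹ - (a 0 : ℝ)⁻¹) * a 0 = a 1 * a 0 / 2 - a 1 := by field_simp
          linarith
        exact_mod_cast this
      interval_cases a 0 <;> omega

lemma three_one (p q w : ℕ) (hp : 0 < p) (hpq : p ≤ q) (hqw : q ≤ w)
    (hs : 1 / (p : ℝ) + 1 / q + 1 / w = 1) : p * q ≤ 9 ∧ (9 ≤ p * q → p = 3 ∧ q = 3 ∧ w = 3) := by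
  have hp' : (0 : ℝ) < p := by exact_mod_cast hp
  have hq' : (0 : ℝ) < q := by exact_mod_cast (by omega : 0 < q)
  have hw' : (0 : ℝ) < w := by exact_mod_cast (by omega : 0 < w)
  have e : q * w + p * w + p * q = p * q * w := by
    field_simp at hs
    have : (q * w + p * w + p * q : ℝ) = p * q * w := by linarith
    exact_mod_cast this
  have hp3 : p ≤ 3 := by
    by_contra hcon
    push Not at hcon
    have h1 : 4 * (q * w) ≤ p * (q * w) := Nat.mul_le_mul_right _ hcon
    have h2 : p * w ≤ q * w := Nat.mul_le_mul_right _ hpq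
    have h3 : p * q ≤ w * q := Nat.mul_le_mul_right _ (by omega)
    have h4 : 0 < q * w := Nat.mul_pos (by omega) (by omega)
    nlinarith
  have hq4 : q ≤ 4 := by
    by_contra hcon
    push Not at hcon
    have h1 : 5 * w ≤ q * w := Nat.mul_le_mul_right _ hcon
    interval_cases p
    · nlinarith
    · nlinarith
    · nlinarith
  interval_cases p <;> interval_cases q <;> omega

lemma tt_dvd (g i m : ℕ) (him : i < m) : tt g i + 1 ∣ tt g m := by
  rw [← tt_prod g m]
  exact Dvd.dvd.mul_left (dvd_prod_of_mem (fun i => tt g i + 1) (mem_range.mpr him)) g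

lemma lcm_last (k : ℕ) (A : Fin (k + 3) → ℕ) (h : ∀ i, A i ∣ A (Fin.last (k + 2))) :
    Finset.univ.lcm A = A (Fin.last (k + 2)) :=
  Nat.dvd_antisymm (Finset.lcm_dvd (fun i _ => h i)) (Finset.dvd_lcm (mem_univ _))

lemma F_le (k : ℕ) (A : Fin (k + 3) → ℕ) (hpos : ∀ i, 0 < A i) :
    ((∏ i, A i : ℕ) : ℚ) / ((Finset.univ.lcm A : ℕ) : ℚ) ≤
      ((∏ i : Fin (k + 2), A i.castSucc : ℕ) : ℚ) := by
  rw [Fin.prod_univ_castSucc]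
  have hL : 0 < Finset.univ.lcm A := by
    apply Nat.pos_of_ne_zero
    rw [Ne, Finset.lcm_eq_zero_iff]
    rintro ⟨i, -, hi⟩
    exact (hpos i).ne' hi
  have h1 : A (Fin.last (k + 2)) ≤ Finset.univ.lcm A :=
    Nat.le_of_dvd hL (Finset.dvd_lcm (mem_univ _))
  rw [div_le_iff₀ (by exact_mod_cast hL)]
  exact_mod_cast Nat.mul_le_mul_left _ h1

lemma F_eq (k : ℕ) (A : Fin (k + 3) → ℕ) (hpos : ∀ i, 0 < A i)
    (h : ∀ i, A i ∣ A (Fin.last (k + 2))) :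
    ((∏ i, A i : ℕ) : ℚ) / ((Finset.univ.lcm A : ℕ) : ℚ) =
      ((∏ i : Fin (k + 2), A i.castSucc : ℕ) : ℚ) := by
  rw [lcm_last k A h, Fin.prod_univ_castSucc]
  have : (A (Fin.last (k + 2)) : ℚ) ≠ 0 := by exact_mod_cast (hpos _).ne'
  push_cast
  field_simp

/-- Let `A = (α₁,…,αₙ)` be a unit fraction partition of `g ≥ 1`
with `n ≥ 3` and `α₁ ≤ ⋯ ≤ αₙ`, and set `F_{n-1}(A) = (α₁⋯αₙ)/lcm(α₁,…,αₙ)`.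
If `(n,g) = (3,1)` then `F_{n-1}(A) ≤ 9` with equality iff `A = (3,3,3)`; otherwise
`F_{n-1}(A) ≤ 2·t_{g,n-1}²/g`, with equality iff `A` is one of `(6,6,6)`,
`(2,6,6,6)`, `(s_{g,1},…,s_{g,n-2},2t_{g,n-1},2t_{g,n-1})`. -/
theorem ufp_Fnm1_bound
    (g n : ℕ) (hg : 1 ≤ g) (hn : 3 ≤ n)
    (A : Fin n → ℕ) (hA : IsUFP g A) (hmono : Monotone A) :
    (n = 3 ∧ g = 1 →
      ((∏ i, A i : ℕ) : ℚ) / ((Finset.univ.lcm A : ℕ) : ℚ) ≤ 9 ∧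
        (((∏ i, A i : ℕ) : ℚ) / ((Finset.univ.lcm A : ℕ) : ℚ) = 9 ↔
          ∀ i, A i = 3)) ∧
    (¬(n = 3 ∧ g = 1) →
      ((∏ i, A i : ℕ) : ℚ) / ((Finset.univ.lcm A : ℕ) : ℚ) ≤
          2 * (tsylv g (n - 1) : ℚ) ^ 2 / (g : ℚ) ∧
        (((∏ i, A i : ℕ) : ℚ) / ((Finset.univ.lcm A : ℕ) : ℚ) =
            2 * (tsylv g (n - 1) : ℚ) ^ 2 / (g : ℚ) ↔
          (n = 3 ∧ ∀ i, A i = 6) ∨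
          (n = 4 ∧ ∀ i : Fin n, A i = if i.val = 0 then 2 else 6) ∨
          (∀ i : Fin n, A i =
            if i.val + 1 ≤ n - 2 then sylv g (i.val + 1) else 2 * tsylv g (n - 1)))) := by
  obtain ⟨k, rfl⟩ : ∃ k, n = k + 3 := ⟨n - 3, by omega⟩
  obtain ⟨hpos, hs⟩ := hA
  have hFle := F_le k A hpos
  have hFeq := F_eq k A hpos
  set F : ℚ := ((∏ i, A i : ℕ) : ℚ) / ((Finset.univ.lcm A : ℕ) : ℚ) with hF
  obtain ⟨a, haA⟩ : ∃ a : ℕ → ℕ, a = fun i => A ⟨min i (k + 2), by omega⟩ := ⟨_, rfl⟩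
  have hAa : ∀ i : Fin (k + 3), A i = a i.val := by
    intro i
    rw [haA]
    congr 1
    ext
    simp only
    omega
  have ha : ∀ i, 0 < a i := fun i => by rw [haA]; exact hpos _
  have mono : Monotone a := by
    intro i j hij
    rw [haA]
    apply hmono
    simp only [Fin.mk_le_mk]
    omega
  have hsum : ∑ i ∈ range (k + 3), 1 / (a i : ℝ) = 1 / (g : ℝ) := by
    rw [sum_range]
    have h2 : ((1 / (g : ℚ) : ℚ) : ℝ) = ((∑ i, (1 : ℚ) / (A i : ℚ) : ℚ) : ℝ) := by rw [hs]
    push_cast at h2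
    rw [h2]
    exact sum_congr rfl fun i _ => by rw [hAa i]
  have hprod : ∏ i : Fin (k + 2), A i.castSucc = ∏ i ∈ range (k + 2), a i := by
    rw [prod_range]
    exact prod_congr rfl fun i _ => by rw [hAa]; rfl
  have hlast : A (Fin.last (k + 2)) = a (k + 2) := by rw [hAa]; rfl
  rw [hprod] at hFle hFeq
  have hg' : (0 : ℚ) < g := by exact_mod_cast hg
  constructor
  · rintro ⟨hk, rfl⟩
    obtain rfl : k = 0 := by omega
    have h3 := three_one (a 0) (a 1) (a 2) (ha 0) (mono (by omega)) (mono (by omega)) (by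
      simpa [sum_range_succ] using hsum)
    have hp : ∏ i ∈ range (0 + 2), a i = a 0 * a 1 := by simp [prod_range_succ]
    rw [hp] at hFle hFeq
    have h9 : ((a 0 * a 1 : ℕ) : ℚ) ≤ 9 := by exact_mod_cast h3.1
    refine ⟨hFle.trans h9, fun h => ?_, fun h => ?_⟩
    · have h4 := h3.2 (by rw [h] at hFle; exact_mod_cast hFle)
      intro i
      rw [hAa]
      have := i.isLt
      rcases (by omega : i.val = 0 ∨ i.val = 1 ∨ i.val = 2) with h | h | h <;> rw [h] <;> simp [h4]
    · rw [hFeq (fun i => by rw [h, h])]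
      have e0 : a 0 = 3 := by have := hAa 0; rw [h] at this; exact this.symm
      have e1 : a 1 = 3 := by have := hAa 1; rw [h] at this; exact this.symm
      rw [e0, e1]; norm_num
  · intro hne
    have hne' : ¬(k = 0 ∧ g = 1) := fun h => hne ⟨by omega, h.2⟩
    have hcore := core_bound g k hg a ha mono hsum hne'
    have htt : tsylv g (k + 3 - 1) = tt g (k + 1) := by
      rw [tsylv, show k + 3 - 1 = (k + 1) + 1 by omega, sylv_eq_tt]; omega
    rw [htt]
    -- the explicit tuples attain the bound
    have hval : ((k = 0 ∧ g = 2 ∧ ∀ i, i < 3 → a i = 6) ∨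
        (k = 1 ∧ g = 1 ∧ ∀ i, i < 4 → a i = if i = 0 then 2 else 6) ∨
        (∀ i, i < k + 3 → a i = if i ≤ k then tt g i + 1 else 2 * tt g (k + 1))) →
        g * ∏ i ∈ range (k + 2), a i = 2 * tt g (k + 1) ^ 2 ∧ ∀ i, i < k + 3 → a i ∣ a (k + 2) := by
      rintro (⟨rfl, rfl, h⟩ | ⟨rfl, rfl, h⟩ | h)
      · refine ⟨?_, fun i hi => ?_⟩
        · simp [prod_range_succ, h, tt]
        · rw [h i hi, h _ (by omega)]
      · refine ⟨?_, fun i hi => ?_⟩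
        · simp [prod_range_succ, h, tt]
        · rw [h i hi, h _ (by omega)]
          rw [if_neg (by omega : ¬(1 + 2 = 0))]
          split_ifs <;> decide
      · have hk1 := h (k + 1) (by omega)
        have hk2 := h (k + 2) (by omega)
        rw [if_neg (by omega)] at hk1 hk2
        refine ⟨?_, fun i hi => ?_⟩
        · rw [prod_range_succ, hk1]
          have : ∏ i ∈ range (k + 1), a i = ∏ i ∈ range (k + 1), (tt g i + 1) := by
            refine prod_congr rfl fun i hi => ?_
            rw [mem_range] at hi
            rw [h i (by omega), if_pos (by omega)]
          rw [this, ← mul_assoc, tt_prod]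
          ring
        · rw [hk2, h i hi]
          split_ifs with h5
          · exact Dvd.dvd.mul_left (tt_dvd g i (k + 1) (by omega)) 2
          · exact dvd_rfl
    have hbound : g * ∏ i ∈ range (k + 2), a i ≤ 2 * tt g (k + 1) ^ 2 := by
      by_contra hcon
      push Not at hcon
      have := (hval (hcore hcon.le)).1
      omega
    have hboundQ : ((∏ i ∈ range (k + 2), a i : ℕ) : ℚ) ≤ 2 * (tt g (k + 1) : ℚ) ^ 2 / (g : ℚ) := by
      rw [le_div_iff₀ hg', mul_comm]
      exact_mod_cast hbound
    refine ⟨hFle.trans hboundQ, fun h => ?_, fun h => ?_⟩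
    · rw [h, div_le_iff₀ hg', mul_comm _ (g : ℚ)] at hFle
      rcases hcore (by exact_mod_cast hFle) with ⟨h1, -, h2⟩ | ⟨h1, -, h2⟩ | h2
      · left
        refine ⟨by omega, fun i => ?_⟩
        rw [hAa, h2 _ (by omega)]
      · right; left
        refine ⟨by omega, fun i => ?_⟩
        rw [hAa, h2 _ (by omega)]
      · right; right
        intro i
        rw [hAa, h2 _ i.isLt, sylv_eq_tt]
        by_cases h5 : i.val ≤ k
        · rw [if_pos h5, if_pos (by omega)]
        · rw [if_neg h5, if_neg (by omega)]
    · have hv : g * ∏ i ∈ range (k + 2), a i = 2 * tt g (k + 1) ^ 2 ∧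
          ∀ i, i < k + 3 → a i ∣ a (k + 2) := by
        apply hval
        rcases h with ⟨h1, h2⟩ | ⟨h1, h2⟩ | h2
        · obtain rfl : k = 0 := by omega
          have h3 : ∀ i, i < 3 → a i = 6 := fun i hi => by
            have := hAa ⟨i, hi⟩
            rw [h2] at this
            exact this.symm
          refine Or.inl ⟨rfl, ?_, h3⟩
          simp [sum_range_succ, h3] at hsum
          norm_num at hsum
          have : (g : ℝ) = 2 := by
            rw [← inv_inv (g : ℝ), ← hsum]; norm_num
          exact_mod_cast this
        · obtain rfl : k = 1 := by omega
          have h3 : ∀ i, i < 4 → a i = if i = 0 then 2 else 6 := fun i hi => by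
            have := hAa ⟨i, hi⟩
            rw [h2] at this
            exact this.symm
          refine Or.inr (Or.inl ⟨rfl, ?_, h3⟩)
          simp [sum_range_succ, h3] at hsum
          norm_num at hsum
          exact hsum
        · right; right
          intro i hi
          have := hAa ⟨i, hi⟩
          rw [h2, sylv_eq_tt] at this
          simp only at this
          rw [← this]
          by_cases h5 : i ≤ k
          · rw [if_pos h5, if_pos (by omega)]
          · rw [if_neg h5, if_neg (by omega)]
      rw [hFeq (fun i => by rw [hlast, hAa]; exact hv.2 _ i.isLt), eq_div_iff hg'.ne',
        mul_comm _ (g : ℚ)]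
      exact_mod_cast hv.1
end

section
/- Let g ≥ 1, n ≥ 3, and let A = (α₁,…,αₙ) be a unit fraction partition of g with α₁ ≤ ⋯ ≤ αₙ; set F_{n−2}(A) = (α₁⋯αₙ)/lcm(α₁,…,αₙ)². If n = 4 and g ∈ {1,2}, then F_{n−2}(A) ≤ 16g² with equality if and only if A = (4g,4g,4g,4g). If (n,g) = (5,1), then F_{n−2}(A) ≤ 128 with equality if and only if A = (2,8,8,8,8). In all other cases F_{n−2}(A) ≤ 3·t_{g,n−2}²/g, with equality if and only if A is one of (12,12,12,12) or (s_{g,1}, …, s_{g,n−3}, 3t_{g,n−2}, 3t_{g,n−2}, 3t_{g,n−2}). -/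
open Finset

lemma amgm_aux (N : ℕ) (w : ℕ → ℚ) (hw : ∀ i < N, 0 < w i)
    (hs : ∑ i ∈ range N, w i ≤ N) :
    ∏ i ∈ range N, w i ≤ 1 ∧ (∏ i ∈ range N, w i = 1 → ∀ i < N, w i = 1) := by
  have hw' : ∀ i ∈ range N, (0 : ℝ) < (w i : ℝ) := fun i hi => by
    exact_mod_cast hw i (mem_range.1 hi)
  have hexp : ∏ i ∈ range N, Real.exp ((w i : ℝ) - 1) ≤ 1 := by
    rw [← Real.exp_sum]
    apply Real.exp_le_one_iff.2
    rw [sum_sub_distrib]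
    have : ((∑ i ∈ range N, w i : ℚ) : ℝ) ≤ N := by exact_mod_cast hs
    push_cast at this
    simp
    linarith
  have hle : ∀ i ∈ range N, (w i : ℝ) ≤ Real.exp ((w i : ℝ) - 1) := fun i _ => by
    have := Real.add_one_le_exp ((w i : ℝ) - 1)
    linarith
  constructor
  · have : ∏ i ∈ range N, (w i : ℝ) ≤ 1 :=
      (prod_le_prod (fun i hi => (hw' i hi).le) hle).trans hexp
    exact_mod_cast this
  · intro h i hi
    by_contra hne
    have : ∏ i ∈ range N, (w i : ℝ) < 1 := by
      refine (prod_lt_prod hw' hle ⟨i, mem_range.2 hi, ?_⟩).trans_le hexp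
      have h1 : (w i : ℝ) - 1 ≠ 0 := by
        intro h0
        apply hne
        have : (w i : ℝ) = 1 := by linarith
        exact_mod_cast this
      have := Real.add_one_lt_exp h1
      linarith
    have h2 : ∏ i ∈ range N, w i < 1 := by exact_mod_cast this
    linarith

lemma abel_aux_s12 (N : ℕ) (y z : ℕ → ℚ) (hy : ∀ i < N, 0 < y i)
    (hanti : ∀ i, i + 1 < N → y (i + 1) ≤ y i)
    (hpre : ∀ j < N, ∑ i ∈ range j, y i ≤ ∑ i ∈ range j, z i) :
    ∀ k, k < N → ∑ i ∈ range (k + 1), (z i / y i - 1) ≤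
      (∑ i ∈ range (k + 1), z i - ∑ i ∈ range (k + 1), y i) / y k := by
  intro k
  induction k with
  | zero =>
    intro h
    have := hy 0 h
    simp
    apply le_of_eq
    field_simp
    ring
  | succ k ih =>
    intro h
    have h0 := hy k (by omega)
    have h1 := hy (k + 1) h
    have ih := ih (by omega)
    have hD := hpre (k + 1) h
    have hA := hanti k h
    rw [sum_range_succ]
    rw [sum_range_succ z (k + 1), sum_range_succ y (k + 1)]
    set D := ∑ i ∈ range (k + 1), z i
    set E := ∑ i ∈ range (k + 1), y i
    have h2 : (D - E) / y k ≤ (D - E) / y (k + 1) :=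
      div_le_div_of_nonneg_left (by linarith) h1 hA
    have h3 : (D + z (k + 1) - (E + y (k + 1))) / y (k + 1)
        = (D - E) / y (k + 1) + (z (k + 1) / y (k + 1) - 1) := by
      field_simp
      ring
    rw [h3]
    linarith

lemma major_aux (N : ℕ) (y z : ℕ → ℚ) (hy : ∀ i < N, 0 < y i) (hz : ∀ i < N, 0 < z i)
    (hanti : ∀ i, i + 1 < N → y (i + 1) ≤ y i)
    (hpre : ∀ j < N, ∑ i ∈ range j, y i ≤ ∑ i ∈ range j, z i)
    (htot : ∑ i ∈ range N, z i ≤ ∑ i ∈ range N, y i) :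
    ∏ i ∈ range N, z i ≤ ∏ i ∈ range N, y i ∧
      (∏ i ∈ range N, z i = ∏ i ∈ range N, y i → ∀ i < N, y i = z i) := by
  have hs : ∑ i ∈ range N, z i / y i ≤ N := by
    rcases N with _ | k
    · simp
    · have h := abel_aux_s12 (k + 1) y z hy hanti hpre k (by omega)
      have h2 : (∑ i ∈ range (k + 1), z i - ∑ i ∈ range (k + 1), y i) / y k ≤ 0 :=
        div_nonpos_of_nonpos_of_nonneg (by linarith) (hy k (by omega)).le
      rw [sum_sub_distrib] at h
      simp only [sum_const, card_range, nsmul_eq_mul, mul_one] at h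
      linarith
  have hP : 0 < ∏ i ∈ range N, y i := prod_pos fun i hi => hy i (mem_range.1 hi)
  obtain ⟨h1, h2⟩ := amgm_aux N (fun i => z i / y i)
    (fun i hi => div_pos (hz i hi) (hy i hi)) hs
  simp only [prod_div_distrib] at h1 h2
  constructor
  · rwa [div_le_one hP] at h1
  · intro h i hi
    have := h2 (by rw [h]; exact div_self hP.ne') i hi
    rw [div_eq_one_iff_eq (hy i hi).ne'] at this
    exact this.symm

/-- shifted truncated Sylvester sequence -/
def tau (g : ℕ) : ℕ → ℕ
  | 0 => g
  | k + 1 => tau g k * (tau g k + 1)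

lemma sylv_eq_tau (g k : ℕ) : sylv g (k + 1) = tau g k + 1 := by
  induction k with
  | zero => rfl
  | succ k ih =>
    show sylv g (k + 1) * (sylv g (k + 1) - 1) + 1 = tau g k * (tau g k + 1) + 1
    rw [ih]
    simp
    ring

lemma tsylv_eq_tau (g k : ℕ) : tsylv g (k + 1) = tau g k := by
  simp [tsylv, sylv_eq_tau]

lemma tau_pos {g : ℕ} (hg : 1 ≤ g) (k : ℕ) : 0 < tau g k := by
  induction k with
  | zero => exact hg
  | succ k ih => exact Nat.mul_pos ih (by omega)

lemma tau_mono {g : ℕ} : Monotone (tau g) := by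
  refine monotone_nat_of_le_succ fun k => ?_
  show tau g k ≤ tau g k * (tau g k + 1)
  nlinarith

lemma le_tau {g : ℕ} (k : ℕ) : g ≤ tau g k := tau_mono (Nat.zero_le k)

lemma tau_one_ge {g : ℕ} (hg : 1 ≤ g) {k : ℕ} (hk : 1 ≤ k) : 2 * g ≤ tau g k := by
  refine le_trans ?_ (tau_mono hk)
  show 2 * g ≤ g * (g + 1)
  nlinarith

lemma tau_two_ge {g : ℕ} (hg : 1 ≤ g) {k : ℕ} (hk : 2 ≤ k) : 6 ≤ tau g k := by
  refine le_trans ?_ (tau_mono hk)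
  have h := tau_one_ge hg (le_refl 1)
  show 6 ≤ tau g 1 * (tau g 1 + 1)
  nlinarith

lemma tau_dvd {g i j : ℕ} (h : i < j) : tau g i + 1 ∣ tau g j := by
  induction j with
  | zero => omega
  | succ j ih =>
    show _ ∣ tau g j * (tau g j + 1)
    rcases Nat.lt_succ_iff_lt_or_eq.1 h with h | h
    · exact (ih h).mul_right _
    · subst h
      exact dvd_mul_left _ _

lemma tau_sum {g : ℕ} (hg : 1 ≤ g) (k : ℕ) :
    ∑ i ∈ range k, (1 : ℚ) / ((tau g i : ℚ) + 1) = 1 / (g : ℚ) - 1 / (tau g k : ℚ) := by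
  induction k with
  | zero => simp [tau]
  | succ k ih =>
    rw [sum_range_succ, ih]
    have : (0 : ℚ) < tau g k := by exact_mod_cast tau_pos hg k
    have hg' : (0 : ℚ) < g := by exact_mod_cast hg
    simp only [tau]
    push_cast
    field_simp
    ring

lemma tau_prod {g : ℕ} (k : ℕ) :
    (g : ℚ) * ∏ i ∈ range k, ((tau g i : ℚ) + 1) = tau g k := by
  induction k with
  | zero => simp [tau]
  | succ k ih =>
    rw [prod_range_succ, ← mul_assoc, ih]
    simp [tau]

lemma integ_aux (g : ℕ) (hg : 1 ≤ g) (a : ℕ → ℕ) (ha : ∀ i, 0 < a i) (k : ℕ) :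
    ∃ u : ℤ, (1 / (g : ℚ) - ∑ i ∈ range k, (1 : ℚ) / (a i : ℚ)) *
      (g * ∏ i ∈ range k, (a i : ℚ)) = u := by
  have hg' : (0 : ℚ) < g := by exact_mod_cast hg
  induction k with
  | zero =>
    refine ⟨1, ?_⟩
    simp
    field_simp
  | succ k ih =>
    obtain ⟨u, hu⟩ := ih
    refine ⟨u * a k - g * ∏ i ∈ range k, (a i : ℤ), ?_⟩
    have : (0 : ℚ) < a k := by exact_mod_cast ha k
    rw [sum_range_succ, prod_range_succ]
    push_cast
    rw [← hu]
    field_simp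
    ring

lemma curtiss_aux (g : ℕ) (hg : 1 ≤ g) (a : ℕ → ℕ) (ha : ∀ i, 0 < a i) (hm : Monotone a)
    (k : ℕ) (hr : 0 < 1 / (g : ℚ) - ∑ i ∈ range k, (1 : ℚ) / (a i : ℚ)) :
    1 / (tau g k : ℚ) ≤ 1 / (g : ℚ) - ∑ i ∈ range k, (1 : ℚ) / (a i : ℚ) := by
  induction k using Nat.strong_induction_on with
  | _ k ih =>
    have ha' : ∀ i, (0 : ℚ) < a i := fun i => by exact_mod_cast ha i
    have hg' : (0 : ℚ) < g := by exact_mod_cast hg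
    by_contra hcon
    push Not at hcon
    have ht : (0 : ℚ) < tau g k := by exact_mod_cast tau_pos hg k
    obtain ⟨hM, -⟩ := major_aux k (fun i => 1 / (a i : ℚ)) (fun i => 1 / ((tau g i : ℚ) + 1))
      (fun i _ => div_pos one_pos (ha' i)) (fun i _ => by positivity)
      (fun i _ => one_div_le_one_div_of_le (ha' i) (by exact_mod_cast hm (Nat.le_succ i)))
      (fun j hj => by
        have h1 : ∑ i ∈ range j, (1 : ℚ) / (a i : ℚ) ≤ ∑ i ∈ range k, (1 : ℚ) / (a i : ℚ) :=
          sum_le_sum_of_subset_of_nonneg (range_subset_range.2 hj.le)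
            (fun i _ _ => by positivity)
        have := ih j hj (by linarith)
        rw [tau_sum hg]
        linarith)
      (by rw [tau_sum hg]; linarith)
    obtain ⟨u, hu⟩ := integ_aux g hg a ha k
    have hP : (0 : ℚ) < ∏ i ∈ range k, (a i : ℚ) := prod_pos fun i _ => ha' i
    have hQ : (0 : ℚ) < ∏ i ∈ range k, ((tau g i : ℚ) + 1) := prod_pos fun i _ => by positivity
    have hu0 : (0 : ℚ) < u := by rw [← hu]; positivity
    have hu1 : (1 : ℚ) ≤ u := by
      have : 0 < u := by exact_mod_cast hu0
      exact_mod_cast this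
    simp only [prod_div_distrib, prod_const_one] at hM
    rw [one_div_le_one_div hQ hP] at hM
    have h2 : (g : ℚ) * ∏ i ∈ range k, (a i : ℚ) ≤ tau g k := by
      rw [← tau_prod]
      gcongr
    rw [← hu] at hu1
    rw [lt_div_iff₀ ht] at hcon
    nlinarith

/-- insertion of `R` at position `p` -/
def insAt (y : ℕ → ℚ) (p : ℕ) (R : ℚ) (i : ℕ) : ℚ :=
  if i < p then y i else if i = p then R else y (i - 1)

lemma ins_sum_lt (y : ℕ → ℚ) (p : ℕ) (R : ℚ) (k : ℕ) (hk : k ≤ p) :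
    ∑ i ∈ range k, insAt y p R i = ∑ i ∈ range k, y i := by
  refine sum_congr rfl fun i hi => ?_
  have := mem_range.1 hi
  simp [insAt, show i < p by omega]

lemma ins_sum_ge (y : ℕ → ℚ) (p : ℕ) (R : ℚ) (k : ℕ) (hk : p ≤ k) :
    ∑ i ∈ range (k + 1), insAt y p R i = R + ∑ i ∈ range k, y i := by
  induction k, hk using Nat.le_induction with
  | base =>
    rw [sum_range_succ, ins_sum_lt y p R p le_rfl]
    simp [insAt, add_comm]
  | succ k hk ih =>
    rw [sum_range_succ, ih, sum_range_succ]
    simp [insAt, show ¬ (k + 1 < p) by omega, show k + 1 ≠ p by omega, add_assoc]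

lemma ins_prod_ge (y : ℕ → ℚ) (p : ℕ) (R : ℚ) (k : ℕ) (hk : p ≤ k) :
    ∏ i ∈ range (k + 1), insAt y p R i = R * ∏ i ∈ range k, y i := by
  induction k, hk using Nat.le_induction with
  | base =>
    have : ∏ i ∈ range p, insAt y p R i = ∏ i ∈ range p, y i := by
      refine prod_congr rfl fun i hi => ?_
      have := mem_range.1 hi
      simp [insAt, this]
    rw [prod_range_succ, this]
    simp [insAt, mul_comm]
  | succ k hk ih =>
    rw [prod_range_succ, ih, prod_range_succ]
    simp [insAt, show ¬ (k + 1 < p) by omega, show k + 1 ≠ p by omega, mul_assoc]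

lemma core (g m : ℕ) (hg : 1 ≤ g) (a : ℕ → ℕ) (ha : ∀ i, 0 < a i) (hm : Monotone a)
    (R : ℚ) (hRdef : R = 1 / (g : ℚ) - ∑ i ∈ range m, (1 : ℚ) / (a i : ℚ))
    (hR : 0 < R) (hR3 : ∀ i < m, R ≤ 3 * (1 / (a i : ℚ)))
    (hex1 : ¬ (m = 1 ∧ (g = 1 ∨ g = 2))) (hex2 : ¬ (m = 2 ∧ g = 1)) :
    (∏ i ∈ range m, (a i : ℚ)) / R ≤ (tau g m : ℚ) ^ 2 / g ∧
    ((∏ i ∈ range m, (a i : ℚ)) / R = (tau g m : ℚ) ^ 2 / g →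
      (∀ i < m, a i = tau g i + 1) ∨ (m = 1 ∧ g = 3 ∧ a 0 = 12)) := by
  have ha' : ∀ i, (0 : ℚ) < a i := fun i => by exact_mod_cast ha i
  have hg' : (0 : ℚ) < g := by exact_mod_cast hg
  have ht : ∀ k, (0 : ℚ) < tau g k := fun k => by exact_mod_cast tau_pos hg k
  set y : ℕ → ℚ := fun i => 1 / (a i : ℚ) with hy
  have hypos : ∀ i, 0 < y i := fun i => div_pos one_pos (ha' i)
  have hyanti : ∀ i j, i ≤ j → y j ≤ y i := fun i j hij =>
    one_div_le_one_div_of_le (ha' i) (by exact_mod_cast hm hij)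
  -- prefix facts
  have hpos : ∀ k ≤ m, R ≤ 1 / (g : ℚ) - ∑ i ∈ range k, y i := fun k hk => by
    have h1 : ∑ i ∈ range k, y i ≤ ∑ i ∈ range m, y i :=
      sum_le_sum_of_subset_of_nonneg (range_subset_range.2 hk) (fun i _ _ => (hypos i).le)
    rw [hRdef]
    linarith
  have hcur : ∀ k ≤ m, 1 / (tau g k : ℚ) ≤ 1 / (g : ℚ) - ∑ i ∈ range k, y i := fun k hk =>
    curtiss_aux g hg a ha hm k (hR.trans_le (hpos k hk))
  obtain ⟨p, hpm, hp1, hp2⟩ : ∃ p ≤ m, (∀ i < p, R ≤ y i) ∧ (∀ i, p ≤ i → i < m → y i < R) := by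
    have hE : ∃ i, m ≤ i ∨ y i < R := ⟨m, Or.inl le_rfl⟩
    classical
    refine ⟨Nat.find hE, Nat.find_min' hE (Or.inl le_rfl), fun i hi => ?_, fun i hi him => ?_⟩
    · have := Nat.find_min hE hi
      push Not at this
      exact this.2
    · rcases Nat.find_spec hE with h | h
      · omega
      · exact (hyanti _ _ hi).trans_lt h
  set z : ℕ → ℚ := fun i => if i < m then 1 / ((tau g i : ℚ) + 1) else 1 / (tau g m : ℚ) with hz
  have hzpos : ∀ i, 0 < z i := fun i => by
    have := ht i
    have := ht m
    simp only [hz]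
    split_ifs <;> positivity
  have hzsum : ∀ k ≤ m, ∑ i ∈ range k, z i = 1 / (g : ℚ) - 1 / (tau g k : ℚ) := fun k hk => by
    rw [← tau_sum hg]
    refine sum_congr rfl fun i hi => ?_
    have := mem_range.1 hi
    simp [hz, show i < m by omega]
  have hzprod : ∏ i ∈ range (m + 1), z i = (g : ℚ) / (tau g m : ℚ) ^ 2 := by
    rw [prod_range_succ]
    have h1 : ∏ i ∈ range m, z i = 1 / ∏ i ∈ range m, ((tau g i : ℚ) + 1) := by
      rw [← prod_const_one, ← prod_div_distrib]
      refine prod_congr rfl fun i hi => ?_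
      simp [hz, mem_range.1 hi]
    have h2 := tau_prod (g := g) m
    have hQ : (0 : ℚ) < ∏ i ∈ range m, ((tau g i : ℚ) + 1) := prod_pos fun i _ => by positivity
    rw [h1]
    simp only [hz, lt_irrefl, if_false]
    rw [← h2]
    field_simp
  have key := major_aux (m + 1) (insAt y p R) z
    (fun i _ => by
      simp only [insAt]
      split_ifs
      · exact hypos _
      · exact hR
      · exact hypos _)
    (fun i _ => hzpos i)
    (fun i hi => by
      simp only [insAt]
      rcases lt_trichotomy i p with h | h | h
      · rcases Nat.lt_or_ge (i + 1) p with h' | h'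
        · simp only [h, h', if_true]
          exact hyanti _ _ (Nat.le_succ i)
        · have : i + 1 = p := by omega
          simp only [this, h, lt_irrefl, if_true, if_false]
          exact hp1 i h
      · subst h
        simp only [show ¬ (i + 1 < i) by omega, show i + 1 ≠ i by omega, lt_irrefl, if_true,
          if_false, Nat.add_sub_cancel]
        exact (hp2 i le_rfl (by omega)).le
      · simp only [show ¬ (i + 1 < p) by omega, show i + 1 ≠ p by omega, show ¬ (i < p) by omega,
          show i ≠ p by omega, if_false, Nat.add_sub_cancel]
        exact hyanti _ _ (by omega))
    (fun j hj => by
      rcases Nat.lt_or_ge p j with h | h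
      · obtain ⟨k, rfl⟩ : ∃ k, j = k + 1 := ⟨j - 1, by omega⟩
        rw [ins_sum_ge y p R k (by omega), hzsum (k + 1) (by omega)]
        by_contra hcon
        push Not at hcon
        have hk : k < m := by omega
        obtain ⟨d, hd⟩ : ∃ d, m = k + d + 1 := ⟨m - k - 1, by omega⟩
        have hS : ((d : ℚ) + 1) * y (m - 1) ≤ ∑ i ∈ range m, y i - ∑ i ∈ range k, y i := by
          rw [← sum_Ico_eq_sub _ hk.le]
          have := card_nsmul_le_sum (Ico k m) y (y (m - 1)) (fun i hi => by
            have := (mem_Ico.1 hi).2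
            exact hyanti _ _ (by omega))
          simp only [Nat.card_Ico, nsmul_eq_mul] at this
          rw [show m - k = d + 1 by omega] at this
          push_cast at this
          exact this
        have hc := hcur k hk.le
        have h3 := hR3 (m - 1) (by omega)
        have hyy : (1 / (a (m - 1) : ℚ)) = y (m - 1) := rfl
        rw [hyy] at h3
        have htk := ht k
        have e1 : (1 : ℚ) / (tau g (k + 1) : ℚ) = (1 / (tau g k : ℚ)) * (1 / ((tau g k : ℚ) + 1)) := by
          simp only [tau]
          push_cast
          field_simp
        set S := ∑ i ∈ range m, y i - ∑ i ∈ range k, y i with hSdef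
        have hS1 : S < 1 / (tau g (k + 1) : ℚ) := by
          rw [hRdef] at hcon
          linarith
        have hS2 : 1 / (tau g k : ℚ) ≤ S + R := by
          rw [hRdef]
          linarith
        have hdd : (0 : ℚ) ≤ d := Nat.cast_nonneg d
        have h4 : ((d : ℚ) + 1) * (1 / (tau g k : ℚ)) ≤ S * ((d : ℚ) + 4) := by nlinarith
        rw [e1] at hS1
        have h5 : S * ((d : ℚ) + 4) <
            (1 / (tau g k : ℚ)) * (1 / ((tau g k : ℚ) + 1)) * ((d : ℚ) + 4) :=
          mul_lt_mul_of_pos_right hS1 (by positivity)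
        have h6 := h4.trans_lt h5
        have h7 : ((d : ℚ) + 1) * ((tau g k : ℚ) + 1) < (d : ℚ) + 4 := by
          field_simp at h6
          linarith
        have h8 : (d + 1) * (tau g k + 1) < d + 4 := by exact_mod_cast h7
        have h9 : (d + 1) * tau g k < 3 := by nlinarith
        have hgk := le_tau (g := g) k
        rcases Nat.lt_or_ge k 1 with hk1 | hk1
        · have hk0 : k = 0 := by omega
          subst hk0
          have h10 : (d + 1) * g < 3 := h9
          have hd2 : d < 2 := by nlinarith
          interval_cases d <;> omega
        · have hb := tau_one_ge hg hk1
          have hd0 : d = 0 := by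
            by_contra h0
            have : 1 ≤ d := by omega
            nlinarith
          subst hd0
          have hk2 : k < 2 := by
            by_contra h0
            have := tau_two_ge hg (show 2 ≤ k by omega)
            omega
          omega
      · rw [ins_sum_lt y p R j h, hzsum j (by omega)]
        have := hcur j (by omega)
        linarith)
    (by
      rw [ins_sum_ge y p R m hpm, sum_range_succ, hzsum m le_rfl]
      simp only [hz, lt_irrefl, if_false]
      rw [hRdef]
      linarith)
  rw [ins_prod_ge y p R m hpm, hzprod] at key
  have hP : (0 : ℚ) < ∏ i ∈ range m, (a i : ℚ) := prod_pos fun i _ => ha' i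
  have hyprod : ∏ i ∈ range m, y i = 1 / ∏ i ∈ range m, (a i : ℚ) := by
    simp [hy]
  rw [hyprod] at key
  have htm := ht m
  have e1 : (g : ℚ) / (tau g m : ℚ) ^ 2 = 1 / ((tau g m : ℚ) ^ 2 / g) := by field_simp
  have e2 : R * (1 / ∏ i ∈ range m, (a i : ℚ)) = 1 / ((∏ i ∈ range m, (a i : ℚ)) / R) := by
    field_simp
  rw [e1, e2] at key
  refine ⟨(one_div_le_one_div (by positivity) (by positivity)).1 key.1, fun heq => ?_⟩
  have hall := key.2 (by rw [heq])
  rcases Nat.lt_or_ge p m with h | h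
  · right
    have q1 := hall p (by omega)
    have q2 := hall m (by omega)
    simp only [insAt, hz, lt_irrefl, if_false, if_true, h, show ¬ (m < p) by omega,
      show m ≠ p by omega] at q1 q2
    have q3 := hR3 (m - 1) (by omega)
    have hyy : (1 / (a (m - 1) : ℚ)) = y (m - 1) := rfl
    rw [hyy, q1, q2] at q3
    have q4 : (tau g m : ℚ) ≤ 3 * ((tau g p : ℚ) + 1) := by
      have := ht p
      field_simp at q3
      linarith
    have q5 : tau g m ≤ 3 * (tau g p + 1) := by exact_mod_cast q4
    obtain ⟨k, rfl⟩ : ∃ k, m = k + 1 := ⟨m - 1, by omega⟩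
    have q6 : tau g p ≤ tau g k := tau_mono (by omega)
    have q7 : tau g (k + 1) = tau g k * (tau g k + 1) := rfl
    have q8 : tau g k ≤ 3 := by
      by_contra h0
      push Not at h0
      nlinarith
    have hk2 : k < 2 := by
      by_contra h0
      have := tau_two_ge hg (show 2 ≤ k by omega)
      omega
    interval_cases k
    · have hg3 : g ≤ 3 := q8
      have hg3' : g = 3 := by omega
      subst hg3'
      refine ⟨rfl, rfl, ?_⟩
      have : (1 : ℚ) / (a 0 : ℚ) = 1 / ((12 : ℕ) : ℚ) := q2
      have h2 : (a 0 : ℚ) = ((12 : ℕ) : ℚ) := by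
        rwa [one_div, one_div, inv_inj] at this
      exact_mod_cast h2
    · exfalso
      have hgg : g * (g + 1) ≤ 3 := q8
      have : g < 2 := by nlinarith
      omega
  · left
    intro i hi
    have q := hall i (by omega)
    simp only [insAt, hz, show i < p by omega, hi, if_true] at q
    have : (1 : ℚ) / (a i : ℚ) = 1 / ((tau g i : ℚ) + 1) := q
    have h2 : (a i : ℚ) = (tau g i : ℚ) + 1 := by
      rwa [one_div, one_div, inv_inj] at this
    exact_mod_cast h2

lemma F_aux (P : ℚ) (hP : 0 < P) (x y z L : ℕ) (hx : 0 < x) (hy : 0 < y) (hz : 0 < z)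
    (hxL : x ≤ L) (hyL : y ≤ L) (hzL : z ≤ L) :
    P * x * y * z / (L : ℚ) ^ 2 ≤ 3 * P / (1 / x + 1 / y + 1 / z) ∧
    (P * x * y * z / (L : ℚ) ^ 2 = 3 * P / (1 / x + 1 / y + 1 / z) ↔ x = L ∧ y = L ∧ z = L) := by
  have hx' : (0 : ℚ) < x := by exact_mod_cast hx
  have hy' : (0 : ℚ) < y := by exact_mod_cast hy
  have hz' : (0 : ℚ) < z := by exact_mod_cast hz
  have hxL' : (x : ℚ) ≤ L := by exact_mod_cast hxL
  have hyL' : (y : ℚ) ≤ L := by exact_mod_cast hyL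
  have hzL' : (z : ℚ) ≤ L := by exact_mod_cast hzL
  have hL' : (0 : ℚ) < L := by linarith
  have e1 : P * x * y * z / (L : ℚ) ^ 2 =
      (P / (1 / x + 1 / y + 1 / z)) * ((y * z + x * z + x * y) / (L : ℚ) ^ 2) := by
    field_simp
  have e2 : 3 * P / (1 / (x : ℚ) + 1 / y + 1 / z) = (P / (1 / x + 1 / y + 1 / z)) * 3 := by ring
  have hK : 0 < P / (1 / (x : ℚ) + 1 / y + 1 / z) := by positivity
  have m1 : (y * z : ℚ) ≤ L * L := by gcongr
  have m2 : (x * z : ℚ) ≤ L * L := by gcongr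
  have m3 : (x * y : ℚ) ≤ L * L := by gcongr
  rw [e1, e2]
  constructor
  · apply mul_le_mul_of_nonneg_left _ hK.le
    rw [div_le_iff₀ (by positivity)]
    nlinarith
  · rw [mul_right_inj' hK.ne', div_eq_iff (by positivity)]
    constructor
    · intro h
      have n1 : (y * z : ℚ) = L * L := by nlinarith
      have n2 : (x * z : ℚ) = L * L := by nlinarith
      have o1 : (y : ℚ) = L := by nlinarith
      have o2 : (z : ℚ) = L := by nlinarith
      have o3 : (x : ℚ) = L := by nlinarith
      exact ⟨by exact_mod_cast o3, by exact_mod_cast o1, by exact_mod_cast o2⟩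
    · rintro ⟨rfl, rfl, rfl⟩
      ring

/-- Let `A = (α₁,…,αₙ)` be a unit fraction partition of `g ≥ 1`
with `n ≥ 3` and `α₁ ≤ ⋯ ≤ αₙ`, and set `F_{n-2}(A) = (α₁⋯αₙ)/lcm(α₁,…,αₙ)²`.
If `n = 4` and `g ∈ {1,2}` then `F_{n-2}(A) ≤ 16g²` with equality iff
`A = (4g,4g,4g,4g)`. If `(n,g) = (5,1)` then `F_{n-2}(A) ≤ 128` with equality iff
`A = (2,8,8,8,8)`. In all other cases `F_{n-2}(A) ≤ 3·t_{g,n-2}²/g`, with equality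
iff `A` is one of `(12,12,12,12)` or
`(s_{g,1},…,s_{g,n-3},3t_{g,n-2},3t_{g,n-2},3t_{g,n-2})`. -/
theorem ufp_Fnm2_bound
    (g n : ℕ) (hg : 1 ≤ g) (hn : 3 ≤ n)
    (A : Fin n → ℕ) (hA : IsUFP g A) (hmono : Monotone A) :
    (n = 4 ∧ (g = 1 ∨ g = 2) →
      ((∏ i, A i : ℕ) : ℚ) / ((Finset.univ.lcm A : ℕ) : ℚ) ^ 2 ≤ 16 * (g : ℚ) ^ 2 ∧
        (((∏ i, A i : ℕ) : ℚ) / ((Finset.univ.lcm A : ℕ) : ℚ) ^ 2 = 16 * (g : ℚ) ^ 2 ↔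
          ∀ i, A i = 4 * g)) ∧
    (n = 5 ∧ g = 1 →
      ((∏ i, A i : ℕ) : ℚ) / ((Finset.univ.lcm A : ℕ) : ℚ) ^ 2 ≤ 128 ∧
        (((∏ i, A i : ℕ) : ℚ) / ((Finset.univ.lcm A : ℕ) : ℚ) ^ 2 = 128 ↔
          ∀ i : Fin n, A i = if i.val = 0 then 2 else 8)) ∧
    (¬(n = 4 ∧ (g = 1 ∨ g = 2)) ∧ ¬(n = 5 ∧ g = 1) →
      ((∏ i, A i : ℕ) : ℚ) / ((Finset.univ.lcm A : ℕ) : ℚ) ^ 2 ≤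
          3 * (tsylv g (n - 2) : ℚ) ^ 2 / (g : ℚ) ∧
        (((∏ i, A i : ℕ) : ℚ) / ((Finset.univ.lcm A : ℕ) : ℚ) ^ 2 =
            3 * (tsylv g (n - 2) : ℚ) ^ 2 / (g : ℚ) ↔
          (n = 4 ∧ ∀ i, A i = 12) ∨
          (∀ i : Fin n, A i =
            if i.val + 1 ≤ n - 3 then sylv g (i.val + 1) else 3 * tsylv g (n - 2)))) := by
  obtain ⟨m, rfl⟩ : ∃ m, n = m + 3 := ⟨n - 3, by omega⟩
  obtain ⟨hpos, hsum⟩ := hA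
  obtain ⟨a, ha, hm, haA⟩ : ∃ a : ℕ → ℕ, (∀ i, 0 < a i) ∧ Monotone a ∧ ∀ i : Fin (m + 3),
      A i = a i.val := by
    refine ⟨fun i => A ⟨min i (m + 2), by omega⟩, fun i => hpos _, fun i j hij => hmono ?_,
      fun i => ?_⟩
    · simp only [Fin.mk_le_mk]
      omega
    · congr 1
      ext
      have := i.2
      simp only
      omega
  have hL0 : Finset.univ.lcm A ≠ 0 := by
    rw [Ne, Finset.lcm_eq_zero_iff]
    rintro ⟨i, -, hi⟩
    exact (hpos i).ne' hi
  have hLd : ∀ i < m + 3, a i ∣ Finset.univ.lcm A := fun i hi => by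
    have := Finset.dvd_lcm (f := A) (Finset.mem_univ (⟨i, hi⟩ : Fin (m + 3)))
    rwa [haA] at this
  have hLeq : ∀ M, (∀ i < m + 3, a i ∣ M) → a (m + 2) = M → Finset.univ.lcm A = M := by
    intro M h1 h2
    apply Nat.dvd_antisymm
    · exact Finset.lcm_dvd fun i _ => by rw [haA]; exact h1 _ i.2
    · rw [← h2]
      exact hLd _ (by omega)
  generalize Finset.univ.lcm A = L at hL0 hLd hLeq ⊢
  have hprod : ((∏ i, A i : ℕ) : ℚ) =
      (∏ i ∈ range m, (a i : ℚ)) * a m * a (m + 1) * a (m + 2) := by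
    have : ∏ i, A i = ∏ i ∈ range (m + 3), a i := by
      rw [Finset.prod_range]
      exact Finset.prod_congr rfl fun i _ => haA i
    rw [this]
    push_cast
    rw [prod_range_succ, prod_range_succ, prod_range_succ]
  have hsum' : 1 / (g : ℚ) = ∑ i ∈ range m, (1 : ℚ) / (a i : ℚ) + 1 / a m + 1 / a (m + 1)
      + 1 / a (m + 2) := by
    have : ∑ i, (1 : ℚ) / (A i : ℚ) = ∑ i ∈ range (m + 3), (1 : ℚ) / (a i : ℚ) := by
      rw [Finset.sum_range]
      exact Finset.sum_congr rfl fun i _ => by rw [haA i]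
    rw [hsum, this, sum_range_succ, sum_range_succ, sum_range_succ]
  rw [hprod]
  have hAall : ∀ c : ℕ → ℕ, (∀ i : Fin (m + 3), A i = c i.val) ↔ ∀ i < m + 3, a i = c i := by
    intro c
    constructor
    · intro h i hi
      have := h ⟨i, hi⟩
      rwa [haA] at this
    · intro h i
      rw [haA]
      exact h _ i.2
  rw [hAall (fun _ => 4 * g), hAall (fun i => if i = 0 then 2 else 8), hAall (fun _ => 12),
    hAall (fun i => if i + 1 ≤ m + 3 - 3 then sylv g (i + 1) else 3 * tsylv g (m + 3 - 2))]
  rw [show m + 3 - 2 = m + 1 by omega, show m + 3 - 3 = m by omega, tsylv_eq_tau]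
  have ha' : ∀ i, (0 : ℚ) < a i := fun i => by exact_mod_cast ha i
  have hg' : (0 : ℚ) < g := by exact_mod_cast hg
  clear hsum hprod haA hAall hpos hmono
  set R : ℚ := 1 / a m + 1 / a (m + 1) + 1 / a (m + 2) with hRdef
  have hRpos : 0 < R := by
    have := ha' m
    have := ha' (m + 1)
    have := ha' (m + 2)
    positivity
  have hR' : R = 1 / (g : ℚ) - ∑ i ∈ range m, (1 : ℚ) / (a i : ℚ) := by
    rw [hsum', hRdef]
    ring
  have hR3 : ∀ i < m, R ≤ 3 * (1 / (a i : ℚ)) := fun i hi => by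
    have h : ∀ j, m ≤ j → (1 : ℚ) / a j ≤ 1 / a i := fun j hj =>
      one_div_le_one_div_of_le (ha' i) (by exact_mod_cast hm (by omega))
    have := h m le_rfl
    have := h (m + 1) (by omega)
    have := h (m + 2) (by omega)
    rw [hRdef]
    linarith
  obtain ⟨hF1, hF2⟩ := F_aux (∏ i ∈ range m, (a i : ℚ)) (prod_pos fun i _ => ha' i)
    (a m) (a (m + 1)) (a (m + 2)) L (ha _) (ha _) (ha _)
    (Nat.le_of_dvd (Nat.pos_of_ne_zero hL0) (hLd _ (by omega)))
    (Nat.le_of_dvd (Nat.pos_of_ne_zero hL0) (hLd _ (by omega)))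
    (Nat.le_of_dvd (Nat.pos_of_ne_zero hL0) (hLd _ (by omega)))
  rw [← hRdef] at hF1 hF2
  set F : ℚ := (∏ i ∈ range m, (a i : ℚ)) * a m * a (m + 1) * a (m + 2) / (L : ℚ) ^ 2 with hFdef
  refine ⟨?_, ?_, ?_⟩
  · rintro ⟨hm1, hg12⟩
    have : m = 1 := by omega
    subst this
    simp only [prod_range_one, sum_range_one] at *
    have h3 := hR3 0 (by norm_num)
    have a0 := ha' 0
    have b1 : (a 0 : ℚ) ≤ 4 * g := by
      rw [hR'] at h3
      field_simp at h3
      linarith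
    have b2 : (g : ℚ) < a 0 := by
      rw [hR'] at hRpos
      field_simp at hRpos
      linarith
    have b1' : a 0 ≤ 4 * g := by exact_mod_cast b1
    have b2' : g < a 0 := by exact_mod_cast b2
    have hb : 3 * (a 0 : ℚ) / R ≤ 16 * (g : ℚ) ^ 2 ∧
        (3 * (a 0 : ℚ) / R = 16 * (g : ℚ) ^ 2 → a 0 = 4 * g) := by
      rw [hR']
      generalize a 0 = x at b1' b2' ⊢
      rcases hg12 with rfl | rfl <;> interval_cases x <;> norm_num
    refine ⟨hF1.trans hb.1, fun h => ?_, fun h => ?_⟩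
    · have c1 : 3 * (a 0 : ℚ) / R = 16 * (g : ℚ) ^ 2 := le_antisymm hb.1 (h ▸ hF1)
      have c2 := hb.2 c1
      obtain ⟨d1, d2, d3⟩ := hF2.1 (h.trans c1.symm)
      have e1 : R = 3 * (1 / (L : ℚ)) := by
        rw [hRdef, d1, d2, d3]
        ring
      have hLQ : (0 : ℚ) < L := by exact_mod_cast Nat.pos_of_ne_zero hL0
      have e2 : (L : ℚ) = 4 * g := by
        rw [hR', c2] at e1
        push_cast at e1
        field_simp at e1
        linarith
      have e3 : L = 4 * g := by exact_mod_cast e2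
      intro i hi
      interval_cases i
      · exact c2
      · exact d1.trans e3
      · exact d2.trans e3
      · exact d3.trans e3
    · have hLL := hLeq (4 * g) (fun i hi => by rw [h i hi]) (h _ (by norm_num))
      rw [hFdef, hLL, h 0 (by norm_num), h 1 (by norm_num), h (1 + 1) (by norm_num),
        h (1 + 2) (by norm_num)]
      push_cast
      field_simp
      ring
  · rintro ⟨hm1, rfl⟩
    have : m = 2 := by omega
    subst this
    simp only [prod_range_succ, sum_range_succ, prod_range_zero, sum_range_zero, one_mul,
      zero_add] at *
    have h3 := hR3 1 (by norm_num)
    have a0 := ha' 0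
    have a1 := ha' 1
    have a01 : a 0 ≤ a 1 := hm (by norm_num)
    have a01' : (a 0 : ℚ) ≤ a 1 := by exact_mod_cast a01
    have b0 : (1 : ℚ) / a 1 ≤ 1 / a 0 := one_div_le_one_div_of_le a0 a01'
    rw [hR'] at h3 hRpos
    have b1 : a 0 ≤ 5 := by
      have : (1 : ℚ) ≤ 5 * (1 / a 0) := by
        norm_num at h3 b0 ⊢
        linarith
      have : (a 0 : ℚ) ≤ 5 := by
        field_simp at this
        linarith
      exact_mod_cast this
    have b2 : 2 ≤ a 0 := by
      by_contra hlt
      have e : a 0 = 1 := by have := ha 0; omega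
      rw [e] at hRpos
      have : (0 : ℚ) < 1 / a 1 := by positivity
      norm_num at hRpos this
      linarith
    have b3 : a 1 ≤ 8 := by
      have e : (1 : ℚ) / a 0 ≤ 1 / 2 :=
        one_div_le_one_div_of_le (by norm_num) (by exact_mod_cast b2)
      have : (1 : ℚ) ≤ 8 * (1 / a 1) := by
        norm_num at h3 e ⊢
        linarith
      have : (a 1 : ℚ) ≤ 8 := by
        field_simp at this
        linarith
      exact_mod_cast this
    have hb : 3 * ((a 0 : ℚ) * a 1) / R ≤ 128 ∧
        (3 * ((a 0 : ℚ) * a 1) / R = 128 → a 0 = 2 ∧ a 1 = 8) := by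
      rw [hR']
      clear * - h3 hRpos a01 b1 b2 b3
      generalize a 0 = x at *
      generalize a 1 = w at *
      interval_cases x <;> interval_cases w <;>
        first
        | (exfalso; norm_num at h3; done)
        | norm_num
    refine ⟨hF1.trans hb.1, fun h => ?_, fun h => ?_⟩
    · have c1 : 3 * ((a 0 : ℚ) * a 1) / R = 128 := le_antisymm hb.1 (h ▸ hF1)
      obtain ⟨c2, c3⟩ := hb.2 c1
      obtain ⟨d1, d2, d3⟩ := hF2.1 (h.trans c1.symm)
      have e1 : R = 3 * (1 / (L : ℚ)) := by
        rw [hRdef, d1, d2, d3]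
        ring
      have hLQ : (0 : ℚ) < L := by exact_mod_cast Nat.pos_of_ne_zero hL0
      have e2 : (L : ℚ) = 8 := by
        rw [hR', c2, c3] at e1
        push_cast at e1
        field_simp at e1
        linarith
      have e3 : L = 8 := by exact_mod_cast e2
      intro i hi
      interval_cases i
      · exact c2
      · exact c3
      · exact d1.trans e3
      · exact d2.trans e3
      · exact d3.trans e3
    · have q0 := h 0 (by norm_num)
      have q1 := h 1 (by norm_num)
      have q2 := h 2 (by norm_num)
      have q3 := h (2 + 1) (by norm_num)
      have q4 := h (2 + 2) (by norm_num)
      norm_num at q0 q1 q2 q3 q4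
      have hLL := hLeq 8 (fun i hi => by
        rw [h i hi]
        split_ifs <;> norm_num) q4
      rw [hFdef, hLL, q0, q1, q2]
      norm_num
      rw [q3, q4]
      norm_num
  · rintro ⟨hx1, hx2⟩
    obtain ⟨k1, k2⟩ := core g m hg a ha hm R hR' hRpos hR3 (fun h => hx1 ⟨by omega, h.2⟩)
      (fun h => hx2 ⟨by omega, h.2⟩)
    have hb : 3 * (∏ i ∈ range m, (a i : ℚ)) / R ≤ 3 * (tau g m : ℚ) ^ 2 / g := by
      rw [mul_div_assoc, mul_div_assoc]
      linarith
    have ht : (0 : ℚ) < tau g m := by exact_mod_cast tau_pos hg m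
    refine ⟨hF1.trans hb, fun h => ?_, fun h => ?_⟩
    · have c1 : 3 * (∏ i ∈ range m, (a i : ℚ)) / R = 3 * (tau g m : ℚ) ^ 2 / g :=
        le_antisymm hb (h ▸ hF1)
      obtain ⟨d1, d2, d3⟩ := hF2.1 (h.trans c1.symm)
      have e1 : R = 3 * (1 / (L : ℚ)) := by
        rw [hRdef, d1, d2, d3]
        ring
      have hLQ : (0 : ℚ) < L := by exact_mod_cast Nat.pos_of_ne_zero hL0
      rw [mul_div_assoc, mul_div_assoc] at c1
      rcases k2 (by linarith) with c | ⟨rfl, rfl, c⟩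
      · right
        have e2 : R = 1 / (tau g m : ℚ) := by
          have : ∑ i ∈ range m, (1 : ℚ) / (a i : ℚ)
              = ∑ i ∈ range m, (1 : ℚ) / ((tau g i : ℚ) + 1) :=
            sum_congr rfl fun i hi => by
              rw [c i (mem_range.1 hi)]
              push_cast
              rfl
          rw [hR', this, tau_sum hg]
          ring
        have e3 : (L : ℚ) = 3 * tau g m := by
          rw [e2] at e1
          field_simp at e1
          linarith
        have e4 : L = 3 * tau g m := by exact_mod_cast e3
        intro i hi
        split_ifs with hi2
        · rw [sylv_eq_tau]
          exact c i (by omega)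
        · have : i = m ∨ i = m + 1 ∨ i = m + 2 := by omega
          rcases this with rfl | rfl | rfl
          · exact d1.trans e4
          · exact d2.trans e4
          · exact d3.trans e4
      · left
        refine ⟨rfl, ?_⟩
        simp only [sum_range_one] at hR'
        rw [hR', c] at e1
        have e2 : (L : ℚ) = 12 := by
          push_cast at e1
          field_simp at e1
          linarith
        have e3 : L = 12 := by exact_mod_cast e2
        intro i hi
        interval_cases i
        · exact c
        · exact d1.trans e3
        · exact d2.trans e3
        · exact d3.trans e3
    · rcases h with ⟨hm1, h⟩ | h
      · have : m = 1 := by omega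
        subst this
        have hLL := hLeq 12 (fun i hi => by rw [h i hi]) (h _ (by norm_num))
        simp only [prod_range_one, sum_range_one] at *
        rw [h 0 (by norm_num), h 1 (by norm_num), h (1 + 1) (by norm_num),
          h (1 + 2) (by norm_num)] at hsum'
        have hg3 : (g : ℚ) = 3 := by
          field_simp at hsum'
          norm_num at hsum'
          linarith
        have hg3' : g = 3 := by exact_mod_cast hg3
        subst hg3'
        rw [hFdef, hLL, h 0 (by norm_num), h 1 (by norm_num), h (1 + 1) (by norm_num),
          h (1 + 2) (by norm_num)]
        norm_num [tau]
      · have c : ∀ i < m, a i = tau g i + 1 := fun i hi => by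
          have := h i (by omega)
          rwa [if_pos (by omega), sylv_eq_tau] at this
        have d1 := h m (by omega)
        have d2 := h (m + 1) (by omega)
        have d3 := h (m + 2) (by omega)
        rw [if_neg (by omega)] at d1 d2 d3
        have hLL := hLeq (3 * tau g m) (fun i hi => by
          rcases Nat.lt_or_ge i m with hi2 | hi2
          · rw [c i hi2]
            exact (tau_dvd hi2).mul_left _
          · rw [h i hi, if_neg (by omega)]) d3
        have hP : (g : ℚ) * ∏ i ∈ range m, (a i : ℚ) = tau g m := by
          rw [← tau_prod]
          congr 1
          exact prod_congr rfl fun i hi => by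
            rw [c i (mem_range.1 hi)]
            push_cast
            rfl
        rw [hFdef, hLL, d1, d2, d3]
        push_cast
        rw [← hP]
        have hPp : (0 : ℚ) < ∏ i ∈ range m, (a i : ℚ) := prod_pos fun i _ => ha' i
        field_simp
end

section
/- Let g ≥ 1 and n ≥ 3, and let x = (x₁,…,xₙ) ∈ A_g^n. Then: (i) 1/g > x₁ ≥ xₙ > 0; (ii) for each k = 1,…,n−1 one cannot simultaneously have x_k = x_{k+1} and x₁⋯x_k = g(x_{k+1} + ⋯ + xₙ); (iii) if for some 1 ≤ k ≤ n−1 the equality x₁⋯x_i = g(x_{i+1} + ⋯ + xₙ) holds for all i ≤ k, then x_i = 1/s_{g,i} for all i = 1,…,k. -/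
open Finset

/-- The product `x₁⋯x_k` of the first `k` coordinates. -/
def prodHead {n : ℕ} (x : Fin n → ℝ) (k : ℕ) : ℝ :=
  ∏ i ∈ Finset.univ.filter (fun i : Fin n => i.val < k), x i

/-- The sum `x_{k+1} + ⋯ + xₙ` of the last `n - k` coordinates. -/
def sumTail {n : ℕ} (x : Fin n → ℝ) (k : ℕ) : ℝ :=
  ∑ i ∈ Finset.univ.filter (fun i : Fin n => k ≤ i.val), x i

/-- The compact set `A_g^n` of points `x ∈ ℝⁿ` with `x₁ ≥ ⋯ ≥ xₙ ≥ 0`,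
`x₁ + ⋯ + xₙ = 1/g` and `x₁⋯x_k ≤ g(x_{k+1} + ⋯ + xₙ)` for `k = 1,…,n-1`. -/
def Agn (g n : ℕ) : Set (Fin n → ℝ) :=
  {x | Antitone x ∧ (∀ i, 0 ≤ x i) ∧ (∑ i, x i) = 1 / (g : ℝ) ∧
    ∀ k, 1 ≤ k → k ≤ n - 1 → prodHead x k ≤ (g : ℝ) * sumTail x k}

theorem prodHead_succ_aux {n : ℕ} (x : Fin n → ℝ) (k : ℕ) (hk : k < n) :
    prodHead x (k + 1) = prodHead x k * x ⟨k, hk⟩ := by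
  unfold prodHead
  have : Finset.univ.filter (fun i : Fin n => i.val < k + 1)
      = insert ⟨k, hk⟩ (Finset.univ.filter (fun i : Fin n => i.val < k)) := by
    ext i
    simp only [Finset.mem_filter, Finset.mem_univ, true_and, Finset.mem_insert, Fin.ext_iff]
    omega
  rw [this, Finset.prod_insert (by simp), mul_comm]

theorem sumTail_succ_aux {n : ℕ} (x : Fin n → ℝ) (k : ℕ) (hk : k < n) :
    sumTail x k = x ⟨k, hk⟩ + sumTail x (k + 1) := by
  unfold sumTail
  have : Finset.univ.filter (fun i : Fin n => k ≤ i.val)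
      = insert ⟨k, hk⟩ (Finset.univ.filter (fun i : Fin n => k + 1 ≤ i.val)) := by
    ext i
    simp only [Finset.mem_filter, Finset.mem_univ, true_and, Finset.mem_insert, Fin.ext_iff]
    omega
  rw [this, Finset.sum_insert (by simp)]

theorem prodHead_zero_aux {n : ℕ} (x : Fin n → ℝ) : prodHead x 0 = 1 := by
  simp [prodHead]

theorem sumTail_zero_aux {n : ℕ} (x : Fin n → ℝ) : sumTail x 0 = ∑ i, x i := by
  simp [sumTail]

theorem sumTail_nonneg_aux {n : ℕ} (x : Fin n → ℝ) (h : ∀ i, 0 ≤ x i) (k : ℕ) :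
    0 ≤ sumTail x k := Finset.sum_nonneg fun i _ => h i

/-- Structure of the set `A_g^n` for `g ≥ 1`, `n ≥ 3`:
(i) `1/g > x₁ ≥ xₙ > 0`; (ii) `ORD(k)` and `PS(g,k)` cannot both hold with
equality; (iii) if `PS(g,i)` holds with equality for all `i ≤ k`, then
`xᵢ = 1/s_{g,i}` for `i = 1,…,k`. -/
theorem Agn_structure
    (g n : ℕ) (hg : 1 ≤ g) (hn : 3 ≤ n)
    (x : Fin n → ℝ) (hx : x ∈ Agn g n) :
    (x ⟨0, by omega⟩ < 1 / (g : ℝ) ∧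
      x ⟨n - 1, by omega⟩ ≤ x ⟨0, by omega⟩ ∧
      0 < x ⟨n - 1, by omega⟩) ∧
    (∀ k, ∀ hk1 : 1 ≤ k, ∀ hk2 : k ≤ n - 1,
      ¬(x ⟨k - 1, by omega⟩ = x ⟨k, by omega⟩ ∧
        prodHead x k = (g : ℝ) * sumTail x k)) ∧
    (∀ k, ∀ hk1 : 1 ≤ k, ∀ hk2 : k ≤ n - 1,
      (∀ i, 1 ≤ i → i ≤ k → prodHead x i = (g : ℝ) * sumTail x i) →
      ∀ i, ∀ hi1 : 1 ≤ i, ∀ hi2 : i ≤ k,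
        x ⟨i - 1, by omega⟩ = 1 / (sylv g i : ℝ)) := by
  obtain ⟨hanti, hnn, hsum, hps⟩ := hx
  have hg1 : (1 : ℝ) ≤ g := by exact_mod_cast hg
  have hg0 : (0 : ℝ) < g := by linarith
  have hT0 : (g : ℝ) * sumTail x 0 = 1 := by
    rw [sumTail_zero_aux, hsum]; field_simp
  -- all tails and heads are positive
  have hpos : ∀ k, k ≤ n - 1 → 0 < prodHead x k ∧ 0 < sumTail x k := by
    intro k
    induction k with
    | zero =>
      intro _
      refine ⟨by rw [prodHead_zero_aux]; norm_num, ?_⟩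
      by_contra hc
      nlinarith
    | succ k ih =>
      intro hk
      obtain ⟨h1, h2⟩ := ih (by omega)
      have hkn : k < n := by omega
      have hxk : 0 < x ⟨k, hkn⟩ := by
        rcases (hnn ⟨k, hkn⟩).lt_or_eq with h | h
        · exact h
        · exfalso
          have : sumTail x k = 0 := by
            unfold sumTail
            apply Finset.sum_eq_zero
            intro i hi
            have hi' : k ≤ i.val := by simpa using hi
            have h3 : x i ≤ x ⟨k, hkn⟩ := hanti hi'
            have h4 := hnn i
            linarith
          linarith
      have hP : 0 < prodHead x (k + 1) := by
        rw [prodHead_succ_aux x k hkn]; positivity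
      refine ⟨hP, ?_⟩
      have := hps (k + 1) (by omega) hk
      by_contra hc
      nlinarith
  have hlast : 0 < x ⟨n - 1, by omega⟩ := by
    have h1 := (hpos (n - 1) le_rfl).2
    rw [sumTail_succ_aux x (n - 1) (by omega)] at h1
    have h2 : sumTail x (n - 1 + 1) = 0 := by
      unfold sumTail
      apply Finset.sum_eq_zero
      intro i hi
      have hi' : n - 1 + 1 ≤ i.val := by simpa using hi
      have := i.isLt
      omega
    linarith
  have hxpos : ∀ i, 0 < x i := fun i =>
    lt_of_lt_of_le hlast (hanti (show i.val ≤ n - 1 by have := i.isLt; omega))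
  have h01 : (g : ℝ) * x ⟨0, by omega⟩ < 1 := by
    have h1 := sumTail_succ_aux x 0 (by omega)
    have h2 := (hpos 1 (by omega)).2
    rw [h1] at hT0
    simp only [zero_add] at hT0
    nlinarith
  have hx1 : x ⟨0, by omega⟩ < 1 := by
    have := hxpos ⟨0, by omega⟩
    nlinarith
  have hxlt : ∀ i, x i < 1 := fun i =>
    lt_of_le_of_lt (hanti (show 0 ≤ i.val by omega)) hx1
  refine ⟨⟨?_, hanti (show 0 ≤ n - 1 by omega), hlast⟩, ?_, ?_⟩
  · rw [lt_div_iff₀ hg0]; linarith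
  · rintro k hk1 hk2 ⟨he, hP⟩
    obtain ⟨m, rfl⟩ : ∃ m, k = m + 1 := ⟨k - 1, by omega⟩
    simp only [Nat.add_sub_cancel] at he
    have hm : m < n := by omega
    rw [prodHead_succ_aux x m hm, sumTail_succ_aux x (m + 1) (by omega), ← he] at hP
    have hxm := hxpos ⟨m, hm⟩
    have htn := sumTail_nonneg_aux x hnn (m + 1 + 1)
    rcases Nat.eq_zero_or_pos m with h0 | h0
    · subst h0
      rw [prodHead_zero_aux] at hP
      have h2 := (hpos (0 + 1 + 1) (by omega)).2
      nlinarith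
    · have hlt : ∀ j, 1 ≤ j → j ≤ n → prodHead x j < 1 := by
        intro j hj
        induction j, hj using Nat.le_induction with
        | base =>
          intro _
          have := prodHead_succ_aux x 0 (by omega)
          rw [prodHead_zero_aux, zero_add, one_mul] at this
          rw [this]; exact hx1
        | succ j hj ih =>
          intro hjn
          rw [prodHead_succ_aux x j (by omega)]
          have h1 := ih (by omega)
          have h2 := hxlt ⟨j, by omega⟩
          have h3 := hxpos ⟨j, by omega⟩
          nlinarith
      have := hlt m h0 (by omega)
      nlinarith
  · intro k hk1 hk2 heq
    have heq0 : ∀ i, i ≤ k → prodHead x i = (g : ℝ) * sumTail x i := by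
      intro i hi
      rcases Nat.eq_zero_or_pos i with h | h
      · subst h; rw [prodHead_zero_aux, hT0]
      · exact heq i h hi
    have hs2 : ∀ j, 2 ≤ sylv g (j + 1) := by
      intro j
      induction j with
      | zero => simp only [sylv]; omega
      | succ j ih =>
        simp only [sylv]
        have : 2 * 1 ≤ sylv g (j + 1) * (sylv g (j + 1) - 1) :=
          Nat.mul_le_mul ih (by omega)
        omega
    have hstep : ∀ i, ∀ hi : i < k, prodHead x i * ((sylv g (i + 1) : ℝ) - 1) = g →
        x ⟨i, by omega⟩ = 1 / (sylv g (i + 1) : ℝ) := by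
      intro i hi hPi
      have hin : i < n := by omega
      have e1 := heq0 i (by omega)
      have e2 := heq0 (i + 1) (by omega)
      rw [prodHead_succ_aux x i hin] at e2
      rw [sumTail_succ_aux x i hin] at e1
      have hs : (2 : ℝ) ≤ sylv g (i + 1) := by exact_mod_cast hs2 i
      have hP := (hpos i (by omega)).1
      rw [eq_div_iff (by linarith)]
      apply mul_left_cancel₀ hP.ne'
      linear_combination e2 - e1 + x ⟨i, hin⟩ * hPi
    have hinv : ∀ i, i ≤ k → prodHead x i * ((sylv g (i + 1) : ℝ) - 1) = g := by
      intro i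
      induction i with
      | zero => intro _; rw [prodHead_zero_aux]; simp [sylv]
      | succ i ih =>
        intro hi
        have h1 := ih (by omega)
        have h2 := hstep i (by omega) h1
        rw [prodHead_succ_aux x i (by omega), h2]
        have hs : (2 : ℝ) ≤ sylv g (i + 1) := by exact_mod_cast hs2 i
        have h3 : (sylv g (i + 1 + 1) : ℝ) - 1
            = (sylv g (i + 1) : ℝ) * ((sylv g (i + 1) : ℝ) - 1) := by
          rw [sylv]
          have := hs2 i
          push_cast [Nat.cast_sub (show 1 ≤ sylv g (i + 1) by omega)]
          ring
        rw [h3, ← h1]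
        field_simp
    intro i hi1 hi2
    obtain ⟨m, rfl⟩ : ∃ m, i = m + 1 := ⟨i - 1, by omega⟩
    exact hstep m (by omega) (hinv m (by omega))
end
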